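/- arXiv:1707.09290 — 4 statements merged into one kernel-verified Lean document; each statement's English description precedes it below -/
import Mathlib

section
/- Let A be a finite-dimensional unital associative F-algebra and let V be an absolutely irreducible A-module, i.e., a finite-dimensional irreducible (simple) A-module with dim_F End_A(V) = 1. Then V is zero action determined. -/
/-- A unital left `A`-module `V` (with compatible `F`-vector space structure) is
*zero action determined* (zad) if every `F`-bilinear map `f : A × V → F` vanishing on
pairs with zero action is of the form `f(x, v) = Φ(x • v)` for some linear `Φ`. -/
def IsZad (F A V : Type*) [Field F] [Ring A] [Algebra F A]
    [AddCommGroup V] [Module F V] [Module A V] [IsScalarTower F A V] : Prop :=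
  ∀ f : A →ₗ[F] V →ₗ[F] F,
    (∀ (a : A) (m : V), a • m = 0 → f a m = 0) →
    ∃ Φ : V →ₗ[F] F, ∀ (x : A) (v : V), f x v = Φ (x • v)
/-- If every `A`-endomorphism of the semisimple module `V` is a scalar, then `A` realizes any
`F`-linear endomorphism of `V` on a finite set of vectors. -/
theorem exists_smul_eq_of_finrank_end_eq_one {F A V : Type*} [Field F] [Ring A] [Algebra F A]
    [AddCommGroup V] [Module F V] [Module A V] [IsScalarTower F A V] [IsSemisimpleModule A V]
    (habs : Module.finrank F (V →ₗ[A] V) = 1) (P : V →ₗ[F] V) (s : Finset V) :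
    ∃ a : A, ∀ m ∈ s, P m = a • m := by
  have hid : (LinearMap.id : V →ₗ[A] V) ≠ 0 := by
    intro h
    have hsub : Subsingleton (V →ₗ[A] V) :=
      ⟨fun g g' => LinearMap.ext fun x => by
        have hx : x = 0 := LinearMap.congr_fun h x
        simp [hx]⟩
    rw [Module.finrank_zero_of_subsingleton] at habs
    exact zero_ne_one habs
  let P' : Module.End (Module.End A V) V :=
    { toFun := P
      map_add' := P.map_add
      map_smul' := fun g x => by
        obtain ⟨c, hc⟩ := (finrank_eq_one_iff_of_nonzero' _ hid).mp habs g
        simp [← hc] }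
  exact jacobson_density P' s

/-- Two vectors that are not proportional are sent to a common prescribed vector by some
`F`-linear endomorphism. -/
theorem exists_linearMap_apply_eq_of_notMem_span {F V : Type*} [Field F] [AddCommGroup V]
    [Module F V] {u v : V} (h : u ∉ Submodule.span F {v - u}) (w : V) :
    ∃ P : V →ₗ[F] V, P u = w ∧ P v = w := by
  obtain ⟨ξ, hξ, hker⟩ := Submodule.exists_le_ker_of_notMem h
  have hv : ξ v = ξ u := by
    have : ξ (v - u) = 0 := hker (Submodule.mem_span_singleton_self _)
    rwa [map_sub, sub_eq_zero] at this
  refine ⟨ξ.smulRight ((ξ u)⁻¹ • w), ?_, ?_⟩ <;> simp [hv, smul_smul, hξ]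

/-- an absolutely irreducible module over a finite-dimensional algebra is zad. -/
theorem stmt_10 (F A V : Type*) [Field F] [Ring A] [Algebra F A] [FiniteDimensional F A]
    [AddCommGroup V] [Module F V] [Module A V] [IsScalarTower F A V]
    [FiniteDimensional F V] [IsSimpleModule A V]
    (habs : Module.finrank F (V →ₗ[A] V) = 1) :
    IsZad F A V := by
  intro f hf
  have : Nontrivial V := IsSimpleModule.nontrivial A V
  obtain ⟨u, hu⟩ := exists_ne (0 : V)
  let e : A →ₗ[F] V := (LinearMap.toSpanSingleton A V u).restrictScalars F
  have he : ∀ a, e a = a • u := fun a => rfl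
  obtain ⟨Φ, hΦ⟩ : ∃ Φ : V →ₗ[F] F, Φ ∘ₗ e = f.flip u := by
    obtain ⟨g, hg⟩ := e.exists_rightInverse_of_surjective
      (LinearMap.range_eq_top.mpr (IsSimpleModule.toSpanSingleton_surjective A hu))
    refine ⟨f.flip u ∘ₗ g, LinearMap.ext fun a => ?_⟩
    have h : f (g (e a) - a) u = 0 := hf _ _ (by
      rw [← he, map_sub, sub_eq_zero]
      exact LinearMap.congr_fun hg (e a))
    simpa [sub_eq_zero] using h
  have hΦu : ∀ a, f a u = Φ (a • u) := fun a => (LinearMap.congr_fun hΦ a).symm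
  refine ⟨Φ, fun x v => ?_⟩
  by_cases h : u ∈ Submodule.span F {v - u}
  · obtain ⟨c, hc⟩ := Submodule.mem_span_singleton.mp h
    have hc0 : c ≠ 0 := by
      rintro rfl
      exact hu (by simpa using hc.symm)
    have hv : v = (c⁻¹ + 1) • u := by
      rw [add_smul, one_smul, ← sub_eq_iff_eq_add]
      exact (eq_inv_smul_iff₀ hc0).mpr hc
    rw [hv, map_smul (f x), hΦu, smul_comm x, map_smul Φ]
  · obtain ⟨P, hPu, hPv⟩ := exists_linearMap_apply_eq_of_notMem_span h (x • v)
    classical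
    obtain ⟨a, ha⟩ := exists_smul_eq_of_finrank_end_eq_one habs P {u, v}
    have hau : a • u = x • v := by rw [← ha u (by simp), hPu]
    have hav : a • v = x • v := by rw [← ha v (by simp), hPv]
    have hxa : f (x - a) v = 0 := hf _ _ (by rw [sub_smul, hav, sub_self])
    have hvu : f a (v - u) = 0 := hf _ _ (by rw [smul_sub, hau, hav, sub_self])
    rw [map_sub, LinearMap.sub_apply, sub_eq_zero] at hxa
    rw [map_sub, sub_eq_zero] at hvu
    rw [hxa, hvu, hΦu, hau]
end

section
/- Suppose A is a finite-dimensional unital associative F-algebra. Let E be the unital F-subalgebra of A generated by all idempotent elements of A, let I be the two-sided ideal of A generated by all commutators [p, a] = p a − a p with p an idempotent of A and a ∈ A, and let R be the Jacobson radical of A. Let e be an idempotent in A and let Ae denote the left ideal A·e regarded as a left A-module. Then the following are equivalent: (1) Ae is zero action determined; (2) Ae/Re is zero action determined and Re ⊆ Ie; (3) Ae/Re is zero action determined and every 1-dimensional (over F) quotient A-module S of Ae satisfies Ext_A^1(S, S) = 0 (equivalently, every short exact sequence of A-modules 0 → S → X → S → 0 splits); (4) Ae = Ee. -/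
/-- The two-sided ideal of `A` generated by all commutators `[p, a] = p*a - a*p` with
`p` an idempotent of `A` and `a ∈ A`. -/
def commutatorIdeal (A : Type*) [Ring A] : TwoSidedIdeal A :=
  TwoSidedIdeal.span {c : A | ∃ p a : A, IsIdempotentElem p ∧ c = p * a - a * p}

/-- The unital subalgebra of `A` generated by all idempotent elements. -/
def idemSubalgebra (F A : Type*) [Field F] [Ring A] [Algebra F A] : Subalgebra F A :=
  Algebra.adjoin F {x : A | IsIdempotentElem x}

/-- `Re = {r * e : r ∈ R}` (with `R` the Jacobson radical) viewed as a submodule of the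
left `A`-module `Ae`. -/
def radSubmodule (A : Type*) [Ring A] (e : A) :
    Submodule A ↥(Ideal.span {e} : Ideal A) :=
  Submodule.comap (Ideal.span {e} : Ideal A).subtype
    (Submodule.map (LinearMap.toSpanSingleton A A e) (Ideal.jacobson (⊥ : Ideal A)))

namespace ZeroActionDetermined

section Idempotents

variable {F A : Type*} [Field F] [Ring A] [Algebra F A]

theorem mem_idemSubalgebra {p : A} (hp : IsIdempotentElem p) :
    p ∈ idemSubalgebra F A :=
  Algebra.subset_adjoin hp

theorem commutator_mem_idemSubalgebra {p : A} (hp : IsIdempotentElem p) (a : A) :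
    p * a - a * p ∈ idemSubalgebra F A := by
  have key : ∀ q : A, IsIdempotentElem q → q * a * (1 - q) ∈ idemSubalgebra F A := by
    intro q hq
    have hqq : q * q = q := hq
    have h : IsIdempotentElem (q + q * a * (1 - q)) := by
      have h1 : (1 - q) * q = 0 := by rw [sub_mul, hqq, one_mul, sub_self]
      change (q + q * a * (1 - q)) * (q + q * a * (1 - q)) = _
      calc _ = q * q + q * q * a * (1 - q) + q * a * ((1 - q) * q)
            + q * a * ((1 - q) * q) * a * (1 - q) := by noncomm_ring
        _ = _ := by rw [h1, hqq]; simp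
    have h2 := sub_mem (mem_idemSubalgebra (F := F) h) (mem_idemSubalgebra hq)
    rwa [add_sub_cancel_left] at h2
  have h := sub_mem (key p hp) (key (1 - p) hp.one_sub)
  convert h using 1
  noncomm_ring

theorem commutator_mem_of_mem_idemSubalgebra {x : A} (hx : x ∈ idemSubalgebra F A) (a : A) :
    x * a - a * x ∈ idemSubalgebra F A := by
  induction hx using Algebra.adjoin_induction generalizing a with
  | mem p hp => exact commutator_mem_idemSubalgebra hp a
  | algebraMap r => simp [Algebra.commutes r a]
  | add x y _ _ hx hy =>
    convert add_mem (hx a) (hy a) using 1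
    noncomm_ring
  | mul x y _ _ hx hy =>
    convert add_mem (hx (y * a)) (hy (a * x)) using 1
    noncomm_ring

theorem mul_commutator_mul_mem_idemSubalgebra {x y : A} (hx : x ∈ idemSubalgebra F A)
    (hy : y ∈ idemSubalgebra F A) (a b : A) :
    a * (x * y - y * x) * b ∈ idemSubalgebra F A := by
  have right : ∀ c, (x * y - y * x) * c ∈ idemSubalgebra F A := by
    intro c
    convert sub_mem (commutator_mem_of_mem_idemSubalgebra hx (y * c))
      (mul_mem hy (commutator_mem_of_mem_idemSubalgebra hx c)) using 1
    noncomm_ring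
  convert sub_mem (right (b * a)) (commutator_mem_of_mem_idemSubalgebra (right b) a) using 1
  noncomm_ring

theorem commutatorIdeal_le_idemSubalgebra {x : A} (hx : x ∈ commutatorIdeal A) :
    x ∈ idemSubalgebra F A := by
  suffices h : ∀ a b, a * x * b ∈ idemSubalgebra F A by simpa using h 1 1
  induction hx using TwoSidedIdeal.span_induction with
  | mem x hx =>
    obtain ⟨p, c, hp, rfl⟩ := hx
    intro a b
    have hpp : p * p = p := hp
    have h := mul_commutator_mul_mem_idemSubalgebra (F := F) (mem_idemSubalgebra hp)
      (commutator_mem_idemSubalgebra (F := F) hp (p * c - c * p)) a b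
    have e1 : p * (p * (p * c - c * p) - (p * c - c * p) * p)
        - (p * (p * c - c * p) - (p * c - c * p) * p) * p = p * c - c * p := by
      have e2 : ∀ z, p * (p * z) = p * z := fun z => by rw [← mul_assoc, hpp]
      simp only [mul_sub, sub_mul, mul_assoc, hpp, e2]
      abel
    rwa [e1] at h
  | zero => intro a b; simp
  | add x y _ _ hx hy =>
    intro a b
    convert add_mem (hx a b) (hy a b) using 1
    noncomm_ring
  | neg x _ hx =>
    intro a b
    convert neg_mem (hx a b) using 1
    noncomm_ring
  | left_absorb c x _ hx =>
    intro a b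
    simpa [mul_assoc] using hx (a * c) b
  | right_absorb c x _ hx =>
    intro a b
    simpa [mul_assoc] using hx a (c * b)

theorem coe_span_singleton_eq_iff {e : A} (he : IsIdempotentElem e) :
    (↑(Ideal.span {e} : Ideal A) : Set A) = {x : A | ∃ a ∈ idemSubalgebra F A, a * e = x} ↔
      ∀ a, a * e ∈ idemSubalgebra F A := by
  constructor
  · intro h a
    have h1 : a * e ∈ (↑(Ideal.span {e} : Ideal A) : Set A) :=
      Ideal.mem_span_singleton'.2 ⟨a, rfl⟩
    rw [h] at h1
    obtain ⟨b, hb, h2⟩ := h1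
    exact h2 ▸ mul_mem hb (mem_idemSubalgebra he)
  · intro h
    ext x
    simp only [SetLike.mem_coe, Ideal.mem_span_singleton', Set.mem_ofPred_eq]
    constructor
    · rintro ⟨a, rfl⟩
      exact ⟨a * e, h a, by rw [mul_assoc, he.eq]⟩
    · rintro ⟨a, -, rfl⟩
      exact ⟨a, rfl⟩

/-- An idempotent is primitive here if its only idempotent summands are `0` and itself
(so `0` is allowed). -/
def NoProperSummand (e : A) : Prop :=
  ∀ p : A, IsIdempotentElem p → e * p = p → p * e = p → p = 0 ∨ p = e

theorem orthogonal_decomposition_induction [FiniteDimensional F A] {P : A → Prop}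
    (base : ∀ e, IsIdempotentElem e → NoProperSummand e → P e)
    (step : ∀ e p, IsIdempotentElem e → IsIdempotentElem p → IsIdempotentElem (e - p) →
      e * p = p → P p → P (e - p) → P e)
    {e : A} (he : IsIdempotentElem e) : P e := by
  have : IsArtinian A A := isArtinian_of_tower F inferInstance
  obtain ⟨s, hs⟩ : ∃ s : Ideal A, s = Ideal.span {e} := ⟨_, rfl⟩
  induction s using WellFoundedLT.induction generalizing e with
  | ind s ih =>
  subst hs
  by_cases h : NoProperSummand e
  · exact base e he h
  · unfold NoProperSummand at h
    push Not at h
    obtain ⟨p, hp, hep, hpe, h0, h1⟩ := h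
    have lt : ∀ q : A, IsIdempotentElem q → e * q = q → q * e = q → q ≠ e →
        (Ideal.span {q} : Ideal A) < Ideal.span {e} := by
      intro q hq heq hqe hne
      refine lt_of_le_of_ne ?_ fun hspan => hne ?_
      · rw [Ideal.span_singleton_le_iff_mem]
        exact Ideal.mem_span_singleton'.2 ⟨q, hqe⟩
      · obtain ⟨a, ha⟩ := Ideal.mem_span_singleton'.1
          (hspan ▸ Ideal.mem_span_singleton_self e : e ∈ Ideal.span {q})
        rw [← heq, ← ha, mul_assoc, hq.eq]
    have hq : IsIdempotentElem (e - p) := by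
      change (e - p) * (e - p) = e - p
      rw [sub_mul, mul_sub, mul_sub, he.eq, hep, hpe, hp.eq]
      simp
    refine step e p he hp hq hep (ih _ (lt p hp hep hpe h1) hp rfl)
      (ih _ (lt _ hq ?_ ?_ ?_) hq rfl)
    · rw [mul_sub, he.eq, hep]
    · rw [sub_mul, he.eq, hpe]
    · simpa using h0

theorem isNilpotent_or_exists_mul_eq [FiniteDimensional F A] {e x : A}
    (hprim : NoProperSummand e) (hex : e * x = x) (hxe : x * e = x) :
    IsNilpotent x ∨ ∃ c, c * x = e := by
  have : IsMulCommutative (Algebra.adjoin F {x}) :=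
    Algebra.isMulCommutative_adjoin F (by simp)
  have : IsArtinian (Algebra.adjoin F {x}) (Algebra.adjoin F {x}) :=
    isArtinian_of_tower F inferInstance
  obtain ⟨n, y, hy⟩ := IsArtinian.exists_pow_succ_smul_dvd
    (⟨x, Algebra.self_mem_adjoin_singleton F x⟩ : Algebra.adjoin F {x}) (1 : Algebra.adjoin F {x})
  have hy' : x ^ (n + 1) * (y : A) = x ^ n := by simpa using congrArg Subtype.val hy
  have hc : Commute x (y : A) :=
    congrArg Subtype.val
      (mul_comm' (⟨x, Algebra.self_mem_adjoin_singleton F x⟩ : Algebra.adjoin F {x}) y)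
  have absorb : ∀ k, x ^ (n + k) * (y : A) ^ k = x ^ n := by
    intro k
    induction k with
    | zero => simp
    | succ k ih =>
      calc x ^ (n + (k + 1)) * (y : A) ^ (k + 1)
          = x ^ k * (x ^ (n + 1) * y) * (y : A) ^ k := by
            rw [pow_succ' (y : A), ← add_assoc, add_right_comm, add_comm (n + 1), pow_add]
            simp only [mul_assoc]
        _ = x ^ (n + k) * (y : A) ^ k := by rw [hy', ← pow_add, add_comm k]
        _ = x ^ n := ih
  have hxp : x ^ (n + 1) * (x ^ (n + 1) * (y : A) ^ (n + 1)) = x ^ (n + 1) := by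
    calc _ = x * (x ^ (n + (n + 1)) * (y : A) ^ (n + 1)) := by
          rw [pow_add x n (n + 1), pow_succ' x n]
          simp only [mul_assoc]
      _ = x ^ (n + 1) := by rw [absorb, pow_succ']
  have hcp : x ^ (n + 1) * (y : A) ^ (n + 1) = (y : A) ^ (n + 1) * x ^ (n + 1) :=
    (hc.pow_pow _ _).eq
  have hp : IsIdempotentElem (x ^ (n + 1) * (y : A) ^ (n + 1)) := by
    change _ * _ = _
    nth_rewrite 1 [hcp]
    rw [mul_assoc, hxp, hcp]
  rcases hprim _ hp (by rw [pow_succ' x, ← mul_assoc, ← mul_assoc, hex])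
    (by rw [hcp, pow_succ x, mul_assoc, mul_assoc, hxe]) with h | h
  · left
    exact ⟨n + 1, by rw [← hxp, h, mul_zero]⟩
  · right
    exact ⟨(y : A) ^ (n + 1) * x ^ n, by rw [mul_assoc, ← pow_succ, ← hcp, h]⟩

end Idempotents
section Modulo

variable {F A : Type*} [Field F] [Ring A] [Algebra F A]

theorem isZad_of_surjective {V W : Type*} [AddCommGroup V] [Module F V] [Module A V]
    [IsScalarTower F A V] [AddCommGroup W] [Module F W] [Module A W] [IsScalarTower F A W]
    (g : V →ₗ[A] W) (hg : Function.Surjective g) (h : IsZad F A V) : IsZad F A W := by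
  intro f hf
  obtain ⟨Φ, hΦ⟩ := h (f.compl₂ (g.restrictScalars F)) (fun a m ham => by
    simpa using hf a (g m) (by rw [← map_smul, ham, map_zero]))
  refine ⟨f 1, fun x w => ?_⟩
  obtain ⟨v, rfl⟩ := hg w
  have h1 := hΦ x v
  have h2 := hΦ 1 (x • v)
  rw [one_smul, ← h1] at h2
  simpa using h2.symm

/-- A symmetry condition satisfied when a cyclic module whose generator has annihilator inside
`{a | a * e ∈ T}` is zero action determined. -/
def IsZadModulo (F : Type*) {A : Type*} [Field F] [Ring A] [Algebra F A] (T : Ideal A)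
    (e : A) : Prop :=
  ∀ f : A →ₗ[F] A →ₗ[F] F, (∀ a b, a * b * e ∈ T → f a b = 0) → ∀ b, f 1 b = f b 1

theorem IsZad.isZadModulo {M : Type*} [AddCommGroup M] [Module F M] [Module A M]
    [IsScalarTower F A M] (h : IsZad F A M) {m : M} (hm : ∀ v : M, ∃ a : A, a • m = v)
    {T : Ideal A} {e : A} (hT : ∀ a : A, a • m = 0 → a * e ∈ T) : IsZadModulo F T e := by
  intro f hf
  obtain ⟨s, hs⟩ := LinearMap.exists_rightInverse_of_surjective
    ((LinearMap.toSpanSingleton A M m).restrictScalars F) (LinearMap.range_eq_top.2 hm)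
  have hs' : ∀ v, s v • m = v := fun v => LinearMap.congr_fun hs v
  have hfs : ∀ a b, f a (s (b • m)) = f a b := by
    intro a b
    rw [← sub_eq_zero, ← map_sub]
    apply hf
    rw [mul_assoc]
    apply T.mul_mem_left
    apply hT
    rw [sub_smul, hs', sub_self]
  obtain ⟨Φ, hΦ⟩ := h (f.compl₂ s) (fun a v hav => by
    apply hf
    apply hT
    rw [mul_smul, hs', hav])
  intro b
  have h1 := hΦ 1 (b • m)
  have h2 := hΦ b ((1 : A) • m)
  rw [LinearMap.compl₂_apply, hfs] at h1 h2
  rw [h1, h2, one_smul, one_smul]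

theorem IsZadModulo.of_summand {T : Ideal A} [T.IsTwoSided] {e p : A} (h : IsZadModulo F T e)
    (hp : IsIdempotentElem p) (hep : e * p = p) : IsZadModulo F T p := by
  intro f hf b
  have hfp : ∀ a x, f a (x * p) = f a x := by
    intro a x
    rw [← sub_eq_zero, ← map_sub]
    apply hf
    rw [mul_assoc, sub_mul, mul_assoc, hp.eq, sub_self, mul_zero]
    exact T.zero_mem
  have := h (f.compl₂ (LinearMap.mulRight F p)) (fun a b hab => by
    apply hf
    rw [LinearMap.mulRight_apply, mul_assoc, mul_assoc, hp.eq, ← hep]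
    simpa only [mul_assoc] using T.mul_mem_right p hab) b
  simpa only [LinearMap.compl₂_apply, LinearMap.mulRight_apply, hfp] using this

theorem exists_character_of_isZadModulo [FiniteDimensional F A] {T : Ideal A} [T.IsTwoSided]
    (hT : ∀ p : A, IsIdempotentElem p → ∀ a, p * a - a * p ∈ T) {e : A}
    (he : IsIdempotentElem e) (hprim : NoProperSummand e) (heT : e ∉ T)
    (hz : IsZadModulo F T e) :
    ∃ φ : A →ₐ[F] F, φ e = 1 ∧ (∀ r ∈ Ideal.jacobson (⊥ : Ideal A), φ r = 0) ∧
      ∀ a, a * e - φ a • e ∈ T := by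
  let q := Ideal.Quotient.mk T
  have hq0 : ∀ x, q x = 0 ↔ x ∈ T := fun x => Ideal.Quotient.eq_zero_iff_mem
  have hqe : ∀ a, q e * q a = q a * q e := fun a => by
    rw [← map_mul, ← map_mul, ← sub_eq_zero, ← map_sub, hq0]
    exact hT e he a
  have hqee : q e * q e = q e := by rw [← map_mul, he.eq]
  have hne : T ⊔ Ideal.span {1 - e} ≠ ⊤ := by
    intro h
    obtain ⟨t, ht, z, hz, htz⟩ := Submodule.mem_sup.1 ((Ideal.eq_top_iff_one _).1 h)
    obtain ⟨a, rfl⟩ := Ideal.mem_span_singleton'.1 hz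
    apply heT
    rw [← one_mul e, ← htz, add_mul, mul_assoc, sub_mul, he.eq, one_mul, sub_self, mul_zero,
      add_zero]
    exact T.mul_mem_right e ht
  obtain ⟨L, hLmax, hL⟩ := Ideal.exists_le_maximal _ hne
  have hTL : T ≤ L := le_sup_left.trans hL
  have h1e : 1 - e ∈ L := hL (Ideal.mem_sup_right (Ideal.mem_span_singleton_self _))
  have heL : e ∉ L := fun h => hLmax.ne_top
    ((Ideal.eq_top_iff_one _).2 (by simpa using add_mem h1e h))
  have unit : ∀ x, e * x = x → x * e = x → x ∉ L → ∃ c, c * x = e := by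
    intro x hex hxe hxL
    have hsup : L ⊔ Ideal.span {x} = ⊤ := hLmax.1.2 _
      (lt_of_le_of_ne le_sup_left fun h => hxL
        (h ▸ Ideal.mem_sup_right (Ideal.mem_span_singleton_self x)))
    obtain ⟨l, hl, z, hz, hlz⟩ := Submodule.mem_sup.1 ((Ideal.eq_top_iff_one _).1 hsup)
    obtain ⟨b, rfl⟩ := Ideal.mem_span_singleton'.1 hz
    have hy : e * l * e ∈ L := by
      have := L.mul_mem_left e (sub_mem hl (L.mul_mem_left l h1e))
      convert this using 1
      noncomm_ring
    rcases isNilpotent_or_exists_mul_eq (F := F) (x := e * l * e) hprim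
      (by rw [← mul_assoc, ← mul_assoc, he.eq]) (by rw [mul_assoc, he.eq]) with h | ⟨c, hc⟩
    · obtain ⟨u, hu⟩ := h.isUnit_one_sub.exists_left_inv
      refine ⟨u * (e * b), ?_⟩
      have hb : e * (b * x) = (1 - e * l * e) * e := by
        have hbx : b * x = (1 - l) * e := by
          rw [← hlz, add_sub_cancel_left, mul_assoc, hxe]
        rw [hbx, sub_mul, mul_sub, sub_mul, one_mul, mul_assoc (e * l), he.eq,
          mul_assoc e]
      rw [mul_assoc, mul_assoc, hb, ← mul_assoc, hu, one_mul]
    · exact absurd (hc ▸ L.mul_mem_left c hy) heL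
  obtain ⟨g, hge, hgL⟩ := Submodule.exists_le_ker_of_notMem
    (p := L.restrictScalars F) (v := e) heL
  obtain ⟨φ, hφe, hφL⟩ : ∃ φ : A →ₗ[F] F, φ e = 1 ∧ ∀ x ∈ L, φ x = 0 :=
    ⟨(g e)⁻¹ • g, by simp [hge], fun x hx => by
      have : g x = 0 := hgL hx
      simp [this]⟩
  have hφ1 : φ 1 = 1 := by
    have := hφL _ h1e
    rw [map_sub, hφe, sub_eq_zero] at this
    exact this
  have hmod : ∀ a, a * e - φ a • e ∈ T := by
    intro a
    by_contra hcon
    obtain ⟨ψ, hψ, hψT⟩ := Submodule.exists_le_ker_of_notMem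
      (p := T.restrictScalars F) (v := a * e - φ a • e) hcon
    have hψT' : ∀ x ∈ T, ψ x = 0 := fun x hx => hψT hx
    have := hz (φ.smulRight (ψ ∘ₗ LinearMap.mulRight F e)) (fun x b hxb => by
      by_cases hxL : x ∈ L
      · simp [hφL x hxL]
      have h1 : e * x * e ∉ L := by
        intro h
        apply hxL
        have h2 : x * e - e * x * e ∈ L := hTL <| by
          rw [← hq0]
          rw [map_sub, map_mul, map_mul, map_mul, mul_assoc, ← hqe x, ← mul_assoc, hqee, sub_self]
        have := add_mem (add_mem h h2) (L.mul_mem_left x h1e)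
        convert this using 1
        noncomm_ring
      obtain ⟨c, hc⟩ := unit (e * x * e) (by rw [← mul_assoc, ← mul_assoc, he.eq])
        (by rw [mul_assoc, he.eq]) h1
      have h2 : b * e ∈ T := by
        rw [← hq0, map_mul, ← hqe, ← hc]
        have h3 : q x * (q b * q e) = 0 := by
          rw [← map_mul, ← map_mul, hq0, ← mul_assoc]
          exact hxb
        rw [map_mul, map_mul, map_mul, mul_assoc, mul_assoc, hqe b, mul_assoc, h3, mul_zero,
          mul_zero]
      simp [hψT' _ h2]) a
    simp only [LinearMap.smulRight_apply, LinearMap.smul_apply, LinearMap.comp_apply,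
      LinearMap.mulRight_apply, hφ1, one_smul, one_mul, smul_eq_mul] at this
    apply hψ
    rw [map_sub, map_smul, this, smul_eq_mul, sub_self]
  have scalar : ∀ c : F, c • e ∈ T → c = 0 := by
    intro c hc
    by_contra h0
    apply heT
    have := (T.restrictScalars F).smul_mem c⁻¹ hc
    rwa [smul_smul, inv_mul_cancel₀ h0, one_smul] at this
  refine ⟨AlgHom.ofLinearMap φ hφ1 fun a b => ?_, hφe, fun r hr => ?_, hmod⟩
  · rw [← sub_eq_zero]
    apply scalar
    have h1 := hmod (a * b)
    have h2 := T.mul_mem_left a (hmod b)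
    have h3 := (T.restrictScalars F).smul_mem (φ b) (hmod a)
    convert sub_mem (add_mem h2 h3) h1 using 1
    simp only [mul_sub, sub_smul, smul_sub, mul_smul_comm, mul_assoc, smul_smul, mul_comm (φ b)]
    abel
  · exact hφL r (Ideal.mem_sInf.1 hr ⟨bot_le, hLmax⟩)

end Modulo

section Ideals

variable {F A : Type*} [Field F] [Ring A] [Algebra F A]

theorem commutator_mem_commutatorIdeal {p : A} (hp : IsIdempotentElem p) (a : A) :
    p * a - a * p ∈ (commutatorIdeal A).asIdeal :=
  TwoSidedIdeal.subset_span ⟨p, a, hp, rfl⟩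

theorem IsZadModulo.mul_mem_of_commutatorIdeal [FiniteDimensional F A] {e : A}
    (he : IsIdempotentElem e) (h : IsZadModulo F (commutatorIdeal A).asIdeal e) :
    (∀ a, a * e ∈ idemSubalgebra F A) ∧
      ∀ r ∈ Ideal.jacobson (⊥ : Ideal A), r * e ∈ (commutatorIdeal A).asIdeal := by
  refine orthogonal_decomposition_induction (F := F)
    (P := fun e => IsZadModulo F (commutatorIdeal A).asIdeal e →
      (∀ a, a * e ∈ idemSubalgebra F A) ∧
        ∀ r ∈ Ideal.jacobson (⊥ : Ideal A), r * e ∈ (commutatorIdeal A).asIdeal) ?_ ?_ he h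
  · intro e he hprim h
    by_cases heI : e ∈ (commutatorIdeal A).asIdeal
    · exact ⟨fun a => commutatorIdeal_le_idemSubalgebra (Ideal.mul_mem_left _ a heI),
        fun r _ => Ideal.mul_mem_left _ r heI⟩
    · obtain ⟨φ, -, hJ, hmod⟩ := exists_character_of_isZadModulo
        (fun p hp a => commutator_mem_commutatorIdeal hp a) he hprim heI h
      refine ⟨fun a => ?_, fun r hr => by simpa [hJ r hr] using hmod r⟩
      have h1 : a * e - φ a • e ∈ idemSubalgebra F A := commutatorIdeal_le_idemSubalgebra (hmod a)
      have h2 : φ a • e ∈ idemSubalgebra F A :=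
        Subalgebra.smul_mem _ (mem_idemSubalgebra he) _
      simpa only [sub_add_cancel] using add_mem h1 h2
  · intro e p he hp hq hep ihp ihq h
    have h1 := ihp (h.of_summand hp hep)
    have h2 := ihq (h.of_summand hq (by rw [mul_sub, he.eq, hep]))
    have split : ∀ a, a * e = a * p + a * (e - p) := fun a => by noncomm_ring
    exact ⟨fun a => split a ▸ add_mem (h1.1 a) (h2.1 a),
      fun r hr => split r ▸ add_mem (h1.2 r hr) (h2.2 r hr)⟩

theorem mul_mem_sup_mul (I : Ideal A) [I.IsTwoSided] {J K : Ideal A} {x y : A} (hx : x ∈ I ⊔ J)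
    (hy : y ∈ I ⊔ K) : x * y ∈ I ⊔ J * K := by
  obtain ⟨i, hi, j, hj, rfl⟩ := Submodule.mem_sup.1 hx
  obtain ⟨i', hi', k, hk, rfl⟩ := Submodule.mem_sup.1 hy
  rw [add_mul, mul_add j, ← add_assoc]
  exact Submodule.add_mem_sup (add_mem (I.mul_mem_right _ hi) (I.mul_mem_left _ hi'))
    (Ideal.mul_mem_mul hj hk)

theorem sup_isTwoSided (I J : Ideal A) [I.IsTwoSided] [J.IsTwoSided] : (I ⊔ J).IsTwoSided where
  mul_mem_of_left b h := by
    obtain ⟨i, hi, j, hj, rfl⟩ := Submodule.mem_sup.1 h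
    rw [add_mul]
    exact Submodule.add_mem_sup (I.mul_mem_right _ hi) (J.mul_mem_right _ hj)

theorem IsZadModulo.mul_mem_of_characters [FiniteDimensional F A] {e : A}
    (he : IsIdempotentElem e)
    (h : IsZadModulo F ((commutatorIdeal A).asIdeal ⊔ Ideal.jacobson ⊥) e)
    (hφ : ∀ φ : A →ₐ[F] F, φ e = 1 →
      LinearMap.ker φ.toLinearMap ≤ LinearMap.ker φ.toLinearMap * LinearMap.ker φ.toLinearMap) :
    ∀ r ∈ Ideal.jacobson (⊥ : Ideal A), r * e ∈ (commutatorIdeal A).asIdeal := by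
  have : IsArtinianRing A := isArtinian_of_tower F inferInstance
  obtain ⟨n, hn⟩ := IsArtinianRing.isNilpotent_jacobson_bot (R := A)
  have hsup : ((commutatorIdeal A).asIdeal ⊔ Ideal.jacobson ⊥).IsTwoSided := sup_isTwoSided _ _
  refine orthogonal_decomposition_induction (F := F)
    (P := fun e => IsZadModulo F ((commutatorIdeal A).asIdeal ⊔ Ideal.jacobson ⊥) e →
      (∀ φ : A →ₐ[F] F, φ e = 1 → LinearMap.ker φ.toLinearMap ≤
        LinearMap.ker φ.toLinearMap * LinearMap.ker φ.toLinearMap) →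
      ∀ r ∈ Ideal.jacobson (⊥ : Ideal A), r * e ∈ (commutatorIdeal A).asIdeal) ?_ ?_ he h hφ
  · intro e he hprim h hφ
    by_cases heI : e ∈ (commutatorIdeal A).asIdeal
    · exact fun r _ => Ideal.mul_mem_left _ r heI
    have heT : e ∉ (commutatorIdeal A).asIdeal ⊔ Ideal.jacobson ⊥ := by
      intro heT
      apply heI
      have hpow : ∀ k, e ∈ (commutatorIdeal A).asIdeal ⊔ Ideal.jacobson (⊥ : Ideal A) ^ k := by
        intro k
        induction k with
        | zero => simp [Submodule.pow_zero, Ideal.one_eq_top]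
        | succ k ih =>
          rw [Submodule.pow_succ, ← he.eq]
          exact mul_mem_sup_mul _ ih heT
      simpa [hn] using hpow n
    obtain ⟨φ, hφe, hJ, hmod⟩ := exists_character_of_isZadModulo
      (fun p hp a => Ideal.mem_sup_left (commutator_mem_commutatorIdeal hp a)) he hprim heT h
    have hpow : ∀ k, ∀ y ∈ LinearMap.ker φ.toLinearMap,
        y * e ∈ (commutatorIdeal A).asIdeal ⊔ Ideal.jacobson (⊥ : Ideal A) ^ k := by
      intro k
      induction k with
      | zero => simp [Submodule.pow_zero, Ideal.one_eq_top]
      | succ k ih =>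
        intro y hy
        refine Submodule.mul_induction_on (hφ φ hφe hy) (fun x hx z hz => ?_)
          (fun x y hx hy => by rw [add_mul]; exact add_mem hx hy)
        · have hz0 : φ z = 0 := hz
          have hze := hmod z
          rw [hz0, zero_smul, sub_zero] at hze
          have h1 := mul_mem_sup_mul _ (ih x hx) hze
          have h2 : x * (z * e - e * z) * e ∈ (commutatorIdeal A).asIdeal := by
            apply Ideal.mul_mem_right
            apply Ideal.mul_mem_left
            simpa using neg_mem (commutator_mem_commutatorIdeal he z)
          rw [Submodule.pow_succ]
          convert add_mem h1 (Ideal.mem_sup_left h2) using 1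
          rw [mul_sub, sub_mul, mul_assoc x (z * e), mul_assoc z e, he.eq]
          noncomm_ring
    intro r hr
    simpa [hn] using hpow n r (hJ r hr)
  · intro e p he hp hq hep ihp ihq h hφ
    have heq : e * (e - p) = e - p := by rw [mul_sub, he.eq, hep]
    have h1 := ihp (h.of_summand hp hep) fun φ h1 => hφ φ (by
      simpa [h1] using congrArg φ hep)
    have h2 := ihq (h.of_summand hq heq) fun φ h1 => hφ φ (by
      simpa only [map_mul, h1, mul_one] using congrArg φ heq)
    have split : ∀ a, a * e = a * p + a * (e - p) := fun a => by noncomm_ring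
    exact fun r hr => split r ▸ add_mem (h1 r hr) (h2 r hr)

theorem isZad_span_singleton {e : A} (he : IsIdempotentElem e)
    (h : ∀ a, a * e ∈ idemSubalgebra F A) : IsZad F A ↥(Ideal.span {e} : Ideal A) := by
  intro f hf
  have balanced : ∀ x ∈ idemSubalgebra F A, ∀ a m, f (a * x) m = f a (x • m) := by
    intro x hx
    induction hx using Algebra.adjoin_induction with
    | mem p hp =>
      intro a m
      have hpp : p * p = p := hp
      have h1 := hf (a * p) (m - p • m) (by
        rw [smul_sub, smul_smul, mul_assoc, hpp, sub_self])
      have h2 := hf (a - a * p) (p • m) (by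
        rw [smul_smul, sub_mul, mul_assoc, hpp, sub_self, zero_smul])
      rw [map_sub, sub_eq_zero] at h1
      rw [map_sub, LinearMap.sub_apply, sub_eq_zero] at h2
      rw [h1, h2]
    | algebraMap r =>
      intro a m
      rw [algebraMap_smul, ← Algebra.commutes, ← Algebra.smul_def, map_smul, map_smul,
        LinearMap.smul_apply]
    | add x y _ _ hx hy =>
      intro a m
      rw [mul_add, map_add, LinearMap.add_apply, hx, hy, add_smul, map_add]
    | mul x y _ _ hx hy =>
      intro a m
      rw [← mul_assoc, hy, hx, smul_smul]
  refine ⟨f.flip ⟨e, Ideal.mem_span_singleton_self e⟩ ∘ₗ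
    ((Ideal.span {e} : Ideal A).subtype.restrictScalars F), fun x v => ?_⟩
  obtain ⟨b, hb⟩ := Ideal.mem_span_singleton'.1 v.2
  have hv : v = (b * e) • (⟨e, Ideal.mem_span_singleton_self e⟩ : Ideal.span {e}) :=
    Subtype.ext (by simp [← hb, mul_assoc, he.eq])
  have h1 := balanced (b * e) (h b) x ⟨e, Ideal.mem_span_singleton_self e⟩
  rw [← hv] at h1
  rw [← h1, hb]
  rfl

end Ideals

section Extensions

universe u

variable {F : Type*} {A : Type u} [Field F] [Ring A] [Algebra F A]

theorem exists_retraction_of_mul_mem_idemSubalgebra {e : A} (he : IsIdempotentElem e)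
    (hE : ∀ a, a * e ∈ idemSubalgebra F A) {S X : Type*} [AddCommGroup S] [Module F S]
    [Module A S] [IsScalarTower F A S] [AddCommGroup X] [Module A X]
    (π : ↥(Ideal.span {e} : Ideal A) →ₗ[A] S) (hπ : Function.Surjective π)
    (hS : Module.finrank F S = 1) (i : S →ₗ[A] X) (p : X →ₗ[A] S)
    (hi : Function.Injective i) (hip : LinearMap.range i = LinearMap.ker p) :
    ∃ r : X →ₗ[A] S, r.comp i = LinearMap.id := by
  have : SMulCommClass F A S := IsScalarTower.to_smulCommClass
  obtain ⟨v, hv0, hv⟩ := finrank_eq_one_iff'.1 hS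
  have idem_S : ∀ q : A, IsIdempotentElem q → (∀ s : S, q • s = 0) ∨ ∀ s : S, q • s = s := by
    intro q hq
    obtain ⟨c, hc⟩ := hv (q • v)
    have hcc : c * c = c := by
      have h1 : q • q • v = q • v := by rw [smul_smul, hq.eq]
      rw [← hc, ← smul_comm, ← hc, smul_smul] at h1
      exact smul_left_injective F hv0 h1
    rcases IsIdempotentElem.iff_eq_zero_or_one.1 hcc with rfl | rfl
    · left
      intro s
      obtain ⟨d, rfl⟩ := hv s
      rw [← smul_comm, ← hc, zero_smul, smul_zero]
    · right
      intro s
      obtain ⟨d, rfl⟩ := hv s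
      rw [← smul_comm, ← hc, one_smul]
  have kill : ∀ q : A, IsIdempotentElem q → (∀ s : S, q • s = 0) → ∀ y : X, q • y = 0 := by
    intro q hq h y
    have h1 : q • y ∈ LinearMap.ker p := by rw [LinearMap.mem_ker, map_smul, h]
    rw [← hip] at h1
    obtain ⟨s, hs⟩ := h1
    rw [← hq.eq, mul_smul, ← hs, ← map_smul, h, map_zero]
  have fixed : ∀ q : A, IsIdempotentElem q → (∀ s : S, q • s = s) → ∀ y : X, q • y = y := by
    intro q hq h y
    have := kill (1 - q) hq.one_sub (fun s => by rw [sub_smul, one_smul, h, sub_self]) y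
    rw [sub_smul, one_smul, sub_eq_zero] at this
    exact this.symm
  have scalar_E : ∀ x ∈ idemSubalgebra F A, ∃ c : F, ∀ y : X, x • y = algebraMap F A c • y := by
    intro x hx
    induction hx using Algebra.adjoin_induction with
    | mem q hq =>
      rcases idem_S q hq with h | h
      · exact ⟨0, fun y => by rw [kill q hq h, map_zero, zero_smul]⟩
      · exact ⟨1, fun y => by rw [fixed q hq h, map_one, one_smul]⟩
    | algebraMap c => exact ⟨c, fun _ => rfl⟩
    | add x y _ _ hx hy =>
      obtain ⟨c, hc⟩ := hx
      obtain ⟨d, hd⟩ := hy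
      exact ⟨c + d, fun z => by rw [add_smul, hc, hd, map_add, add_smul]⟩
    | mul x y _ _ hx hy =>
      obtain ⟨c, hc⟩ := hx
      obtain ⟨d, hd⟩ := hy
      exact ⟨c * d, fun z => by rw [mul_smul, hd, hc, map_mul, mul_smul]⟩
  have e_S : ∀ s : S, e • s = s := by
    refine (idem_S e he).resolve_left fun h => hv0 ?_
    obtain ⟨w, rfl⟩ := hπ v
    obtain ⟨a, ha⟩ := Ideal.mem_span_singleton'.1 w.2
    have hw : w = a • e • (⟨e, Ideal.mem_span_singleton_self e⟩ : Ideal.span {e}) :=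
      Subtype.ext (by simp [← ha, he.eq])
    rw [hw, map_smul, map_smul, h, smul_zero]
  have scalar : ∀ a : A, ∃ c : F, ∀ y : X, a • y = algebraMap F A c • y := by
    intro a
    obtain ⟨c, hc⟩ := scalar_E (a * e) (hE a)
    exact ⟨c, fun y => by rw [← hc, mul_smul, fixed e he e_S]⟩
  let _ : Module F X := Module.compHom X (algebraMap F A)
  have smul_X : ∀ (c : F) (y : X), c • y = algebraMap F A c • y := fun _ _ => rfl
  have i_smul : ∀ (c : F) (s : S), i (c • s) = c • i s := fun c s => by
    rw [smul_X, ← algebraMap_smul A c s, map_smul]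
  let i' : S →ₗ[F] X := { i with map_smul' := i_smul }
  obtain ⟨r, hr⟩ := i'.exists_leftInverse_of_injective (LinearMap.ker_eq_bot.2 hi)
  have r_smul : ∀ (a : A) (y : X), r (a • y) = a • r y := by
    intro a y
    obtain ⟨c, hc⟩ := scalar a
    have h1 : a • r y = c • r y := by
      apply hi
      rw [← algebraMap_smul A c, map_smul, map_smul, hc]
    rw [h1, ← map_smul, smul_X, hc]
  exact ⟨{ r with map_smul' := r_smul }, LinearMap.ext fun s => LinearMap.congr_fun hr s⟩

theorem ker_le_ker_mul_ker_of_splits (φ : A →ₐ[F] F)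
    (h : ∀ (X : Type u) [AddCommGroup X] [Module A X] (i : (A ⧸ RingHom.ker φ) →ₗ[A] X)
      (p : X →ₗ[A] (A ⧸ RingHom.ker φ)), Function.Injective i → Function.Surjective p →
      LinearMap.range i = LinearMap.ker p →
      ∃ r : X →ₗ[A] (A ⧸ RingHom.ker φ), r.comp i = LinearMap.id) :
    LinearMap.ker φ.toLinearMap ≤
      LinearMap.ker φ.toLinearMap * LinearMap.ker φ.toLinearMap := by
  intro l hl
  by_contra hcon
  have hl0 : φ l = 0 := hl
  obtain ⟨g, hgl, hg⟩ := Submodule.exists_le_ker_of_notMem hcon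
  have hg0 : ∀ x y, φ x = 0 → φ y = 0 → g (x * y) = 0 := fun x y hx hy =>
    hg (Submodule.mul_mem_mul hx hy)
  have hgmul : ∀ a x, φ x = 0 → g (a * x) = φ a * g x := by
    intro a x hx
    have := hg0 (a - algebraMap F A (φ a)) x (by simp) hx
    rw [sub_mul, map_sub, ← Algebra.smul_def, map_smul, sub_eq_zero] at this
    exact this
  let L' : Ideal A :=
    { carrier := {x | φ x = 0 ∧ g x = 0}
      add_mem' := fun {x y} hx hy => ⟨by simp [hx.1, hy.1], by simp [hx.2, hy.2]⟩
      zero_mem' := ⟨map_zero _, map_zero _⟩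
      smul_mem' := fun a x hx => ⟨by simp [hx.1], by
        rw [smul_eq_mul, hgmul a x hx.1, hx.2, mul_zero]⟩ }
  have memL' : ∀ x, x ∈ L' ↔ φ x = 0 ∧ g x = 0 := fun _ => Iff.rfl
  have hle : L' ≤ RingHom.ker φ := fun x hx => hx.1
  have mul_l : ∀ a, a * l ∈ L' ↔ a ∈ RingHom.ker φ := by
    intro a
    rw [memL', hgmul a l hl0, map_mul, hl0, RingHom.mem_ker]
    simp [hgl]
  let i : (A ⧸ RingHom.ker φ) →ₗ[A] (A ⧸ L') :=
    Submodule.liftQ _ (L'.mkQ ∘ₗ LinearMap.toSpanSingleton A A l) (fun a ha => by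
      simpa using (mul_l a).2 ha)
  have hi : ∀ a, i (Submodule.Quotient.mk a) = Submodule.Quotient.mk (a * l) := fun a => rfl
  let p : (A ⧸ L') →ₗ[A] (A ⧸ RingHom.ker φ) := Submodule.factor hle
  have hp : ∀ a, p (Submodule.Quotient.mk a) = Submodule.Quotient.mk a := fun a => rfl
  obtain ⟨r, hr⟩ := h (A ⧸ L') i p
    (by
      rw [injective_iff_map_eq_zero]
      intro a ha
      obtain ⟨a, rfl⟩ := Submodule.Quotient.mk_surjective _ a
      rw [hi, Submodule.Quotient.mk_eq_zero, mul_l] at ha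
      rwa [Submodule.Quotient.mk_eq_zero])
    (Submodule.factor_surjective hle)
    (by
      ext a
      obtain ⟨a, rfl⟩ := Submodule.Quotient.mk_surjective _ a
      rw [LinearMap.mem_ker, hp, Submodule.Quotient.mk_eq_zero, RingHom.mem_ker]
      constructor
      · rintro ⟨b, hb⟩
        obtain ⟨b, rfl⟩ := Submodule.Quotient.mk_surjective _ b
        rw [hi, Submodule.Quotient.eq] at hb
        have := hb.1
        rwa [map_sub, map_mul, hl0, mul_zero, zero_sub, neg_eq_zero] at this
      · intro ha
        refine ⟨Submodule.Quotient.mk (algebraMap F A (g a / g l)), ?_⟩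
        rw [hi, Submodule.Quotient.eq, memL', ← Algebra.smul_def]
        simp [hl0, ha, hgl])
  have h1 := LinearMap.congr_fun hr (Submodule.Quotient.mk 1)
  have h2 : r (i (Submodule.Quotient.mk 1)) = 0 := by
    have : i (Submodule.Quotient.mk 1) = l • Submodule.Quotient.mk 1 := by
      rw [hi, one_mul, ← Submodule.Quotient.mk_smul, smul_eq_mul, mul_one]
    rw [this, map_smul]
    obtain ⟨b, hb⟩ := Submodule.Quotient.mk_surjective _ (r (Submodule.Quotient.mk 1))
    rw [← hb, ← Submodule.Quotient.mk_smul, Submodule.Quotient.mk_eq_zero, RingHom.mem_ker]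
    simp [hl0]
  rw [LinearMap.comp_apply, h2, LinearMap.id_apply, eq_comm, Submodule.Quotient.mk_eq_zero,
    RingHom.mem_ker, map_one] at h1
  exact one_ne_zero h1

theorem finrank_quotient_ker (φ : A →ₐ[F] F) : Module.finrank F (A ⧸ RingHom.ker φ) = 1 := by
  rw [finrank_eq_one_iff']
  refine ⟨Submodule.Quotient.mk 1, ?_, fun w => ?_⟩
  · rw [Ne, Submodule.Quotient.mk_eq_zero, RingHom.mem_ker, map_one]
    exact one_ne_zero
  · obtain ⟨a, rfl⟩ := Submodule.Quotient.mk_surjective _ w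
    refine ⟨φ a, ?_⟩
    rw [← Submodule.Quotient.mk_smul, Submodule.Quotient.eq, RingHom.mem_ker]
    simp

end Extensions

section Radical

variable {A : Type*} [Ring A]

theorem exists_smul_generator {e : A} (v : ↥(Ideal.span {e} : Ideal A)) :
    ∃ a : A, a • (⟨e, Ideal.mem_span_singleton_self e⟩ : Ideal.span {e}) = v := by
  obtain ⟨a, ha⟩ := Ideal.mem_span_singleton'.1 v.2
  exact ⟨a, Subtype.ext ha⟩

theorem mem_map_toSpanSingleton {e : A} {J : Ideal A} {x : A} :
    x ∈ Submodule.map (LinearMap.toSpanSingleton A A e) J ↔ ∃ r ∈ J, r * e = x := Iff.rfl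

theorem IsZad.isZadModulo_of_radSubmodule {F : Type*} [Field F] [Algebra F A] {e : A}
    (h : IsZad F A (↥(Ideal.span {e} : Ideal A) ⧸ radSubmodule A e)) {T : Ideal A}
    (hT : ∀ r ∈ Ideal.jacobson (⊥ : Ideal A), r * e ∈ T) : IsZadModulo F T e := by
  refine IsZad.isZadModulo h
    (m := Submodule.Quotient.mk ⟨e, Ideal.mem_span_singleton_self e⟩) (fun w => ?_) fun a ha => ?_
  · obtain ⟨v, rfl⟩ := Submodule.Quotient.mk_surjective _ w
    obtain ⟨a, rfl⟩ := exists_smul_generator v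
    exact ⟨a, rfl⟩
  · rw [← Submodule.Quotient.mk_smul, Submodule.Quotient.mk_eq_zero] at ha
    obtain ⟨r, hr, hre⟩ := ha
    have hre' : r * e = a * e := hre
    exact hre' ▸ hT r hr

theorem map_jacobson_le_iff {e : A} (he : IsIdempotentElem e) (I : Ideal A) [I.IsTwoSided] :
    Submodule.map (LinearMap.toSpanSingleton A A e) (Ideal.jacobson (⊥ : Ideal A)) ≤
        Submodule.map (LinearMap.toSpanSingleton A A e) I ↔
      ∀ r ∈ Ideal.jacobson (⊥ : Ideal A), r * e ∈ I := by
  constructor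
  · intro h r hr
    obtain ⟨x, hx, hxe⟩ := mem_map_toSpanSingleton.1 (h (mem_map_toSpanSingleton.2 ⟨r, hr, rfl⟩))
    exact hxe ▸ I.mul_mem_right e hx
  · rintro h _ ⟨r, hr, rfl⟩
    exact mem_map_toSpanSingleton.2 ⟨r * e, h r hr, by rw [mul_assoc, he.eq]; rfl⟩

end Radical

end ZeroActionDetermined

universe u

/-- for a finite-dimensional algebra `A` and an idempotent `e`, with `E`
the subalgebra generated by idempotents, `I` the ideal generated by commutators of
idempotents with arbitrary elements and `R` the Jacobson radical, the following are
equivalent: (1) `Ae` is zad; (2) `Ae/Re` is zad and `Re ⊆ Ie`; (3) `Ae/Re` is zad and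
every 1-dimensional quotient module `S` of `Ae` satisfies `Ext¹_A(S,S) = 0` (every short
exact sequence `0 → S → X → S → 0` splits); (4) `Ae = Ee`. -/
theorem stmt_12 (F : Type*) (A : Type u) [Field F] [Ring A] [Algebra F A]
    [FiniteDimensional F A] (e : A) (he : IsIdempotentElem e) :
    List.TFAE [
      -- (1) Ae is zad
      IsZad F A ↥(Ideal.span {e} : Ideal A),
      -- (2) Ae/Re is zad and Re ⊆ Ie
      IsZad F A (↥(Ideal.span {e} : Ideal A) ⧸ radSubmodule A e) ∧
        Submodule.map (LinearMap.toSpanSingleton A A e) (Ideal.jacobson (⊥ : Ideal A)) ≤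
          Submodule.map (LinearMap.toSpanSingleton A A e) (commutatorIdeal A).asIdeal,
      -- (3) Ae/Re is zad and every 1-dimensional quotient S of Ae has Ext¹(S,S) = 0
      IsZad F A (↥(Ideal.span {e} : Ideal A) ⧸ radSubmodule A e) ∧
        (∀ (S : Type u) [AddCommGroup S] [Module F S] [Module A S] [IsScalarTower F A S]
          (π : ↥(Ideal.span {e} : Ideal A) →ₗ[A] S), Function.Surjective π →
          Module.finrank F S = 1 →
          ∀ (X : Type u) [AddCommGroup X] [Module A X] (i : S →ₗ[A] X) (p : X →ₗ[A] S),
            Function.Injective i → Function.Surjective p →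
            LinearMap.range i = LinearMap.ker p →
            ∃ r : X →ₗ[A] S, r.comp i = LinearMap.id),
      -- (4) Ae = Ee
      (↑(Ideal.span {e} : Ideal A) : Set A) =
        {x : A | ∃ a ∈ idemSubalgebra F A, a * e = x} ] := by
  rw [ZeroActionDetermined.map_jacobson_le_iff he,
    ZeroActionDetermined.coe_span_singleton_eq_iff he]
  tfae_have 1 → 2 := fun h =>
    ⟨ZeroActionDetermined.isZad_of_surjective _ (Submodule.mkQ_surjective _) h,
      (ZeroActionDetermined.IsZadModulo.mul_mem_of_commutatorIdeal he
        (ZeroActionDetermined.IsZad.isZadModulo h ZeroActionDetermined.exists_smul_generator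
          fun a ha => by
            have hae : a * e = 0 := congrArg Subtype.val ha
            rw [hae]
            exact Submodule.zero_mem _)).2⟩
  tfae_have 2 → 4 := fun h =>
    (ZeroActionDetermined.IsZadModulo.mul_mem_of_commutatorIdeal he
      (ZeroActionDetermined.IsZad.isZadModulo_of_radSubmodule h.1 h.2)).1
  tfae_have 4 → 1 := ZeroActionDetermined.isZad_span_singleton he
  tfae_have 2 → 3 := fun h => ⟨h.1, by
    intro S _ _ _ _ π hπ hS X _ _ i p hi _ hip
    exact ZeroActionDetermined.exists_retraction_of_mul_mem_idemSubalgebra he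
      (tfae_2_to_4 h) π hπ hS i p hi hip⟩
  tfae_have 3 → 2 := by
    rintro ⟨h, hext⟩
    refine ⟨h, ZeroActionDetermined.IsZadModulo.mul_mem_of_characters he
      (ZeroActionDetermined.IsZad.isZadModulo_of_radSubmodule h fun r hr =>
        Ideal.mem_sup_right (Ideal.mul_mem_right e _ hr)) fun φ hφ => ?_⟩
    refine ZeroActionDetermined.ker_le_ker_mul_ker_of_splits φ
      (hext _ ((RingHom.ker φ).mkQ ∘ₗ (Ideal.span {e} : Ideal A).subtype) (fun w => ?_)
        (ZeroActionDetermined.finrank_quotient_ker φ))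
    obtain ⟨a, rfl⟩ := Submodule.Quotient.mk_surjective _ w
    refine ⟨⟨a * e, Ideal.mem_span_singleton'.2 ⟨a, rfl⟩⟩, ?_⟩
    change Submodule.Quotient.mk (a * e) = Submodule.Quotient.mk a
    rw [Submodule.Quotient.eq, RingHom.mem_ker, map_sub, map_mul, hφ, mul_one, sub_self]
  tfae_finish
end

section
/- Suppose A is a finite-dimensional unital associative F-algebra. Let E be the unital F-subalgebra of A generated by all idempotent elements of A, let I be the two-sided ideal of A generated by all commutators [p, a] = p a − a p with p an idempotent of A and a ∈ A, and let R be the Jacobson radical of A. Then the following are equivalent: (1) A is zero product determined; (2) A/R is zero product determined and R ⊆ I; (3) A/R is zero product determined and every 1-dimensional (over F) A-module S satisfies Ext_A^1(S, S) = 0 (equivalently, every short exact sequence of A-modules 0 → S → X → S → 0 splits); (4) A = E. -/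
/-- A unital associative `F`-algebra `A` is *zero product determined* (zpd) if every
`F`-bilinear map `f : A × A → F` vanishing on pairs with zero product is of the form
`f(x, y) = Φ(xy)` for some linear `Φ`. -/
def IsZpd (F A : Type*) [Field F] [Ring A] [Algebra F A] : Prop :=
  ∀ f : A →ₗ[F] A →ₗ[F] F,
    (∀ a b : A, a * b = 0 → f a b = 0) →
    ∃ Φ : A →ₗ[F] F, ∀ x y : A, f x y = Φ (x * y)
universe u

/-- The property of being zero product determined for `A / J`, phrased without passing to the
quotient. -/
def IsZpdModulo (F : Type*) {A : Type*} [Field F] [Ring A] [Algebra F A]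
    (J : TwoSidedIdeal A) : Prop :=
  ∀ f : A →ₗ[F] A →ₗ[F] F, (∀ a b : A, a * b ∈ J → f a b = 0) →
    ∃ Φ : A →ₗ[F] F, ∀ x y : A, f x y = Φ (x * y)

section Zpd

variable {F A : Type*} [Field F] [Ring A] [Algebra F A]

theorem IsZpd.isZpdModulo (h : IsZpd F A) (J : TwoSidedIdeal A) : IsZpdModulo F J :=
  fun f hf => h f fun a b hab => hf a b (hab ▸ J.zero_mem)

theorem IsZpdModulo.mono {J K : TwoSidedIdeal A} (h : IsZpdModulo F J) (hJK : J ≤ K) :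
    IsZpdModulo F K :=
  fun f hf => h f fun a b hab => hf a b (hJK hab)

theorem IsZpd.of_surjective {B : Type*} [Ring B] [Algebra F B] (h : IsZpd F A) (π : A →ₐ[F] B)
    (hπ : Function.Surjective π) : IsZpd F B := by
  intro f hf
  obtain ⟨Φ, hΦ⟩ := h (f.compl₁₂ π.toLinearMap π.toLinearMap) fun a b hab => by
    simpa using hf (π a) (π b) (by rw [← map_mul, hab, map_zero])
  simp only [LinearMap.compl₁₂_apply, AlgHom.toLinearMap_apply] at hΦ
  refine ⟨f.flip 1, fun x y => ?_⟩
  obtain ⟨a, rfl⟩ := hπ x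
  obtain ⟨b, rfl⟩ := hπ y
  have h1 := hΦ (a * b) 1
  simp only [map_mul, map_one, mul_one] at h1
  rw [hΦ, LinearMap.flip_apply, h1]

theorem IsZpd.isZpdModulo_of_ker {B : Type*} [Ring B] [Algebra F B] (h : IsZpd F B)
    (π : A →ₐ[F] B) (hπ : Function.Surjective π) (J : TwoSidedIdeal A)
    (hJ : ∀ a, π a = 0 ↔ a ∈ J) : IsZpdModulo F J := by
  intro f hf
  obtain ⟨s, hs⟩ := π.toLinearMap.exists_rightInverse_of_surjective (LinearMap.range_eq_top.2 hπ)
  have hs' : ∀ b, π (s b) = b := fun b => LinearMap.congr_fun hs b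
  obtain ⟨Φ, hΦ⟩ := h (f.compl₁₂ s s) fun a b hab => by
    simpa using hf (s a) (s b) ((hJ _).1 (by rw [map_mul, hs', hs', hab]))
  refine ⟨Φ ∘ₗ π.toLinearMap, fun x y => ?_⟩
  have hmem : ∀ a, a - s (π a) ∈ J := fun a => (hJ _).1 (by rw [map_sub, hs', sub_self])
  have h1 : f x y = f (s (π x)) y := by
    rw [← sub_eq_zero, ← LinearMap.sub_apply, ← map_sub]
    exact hf _ _ (J.mul_mem_right _ _ (hmem x))
  have h2 : f (s (π x)) y = f (s (π x)) (s (π y)) := by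
    rw [← sub_eq_zero, ← map_sub]
    exact hf _ _ (J.mul_mem_left _ _ (hmem y))
  have h3 := hΦ (π x) (π y)
  rw [LinearMap.compl₁₂_apply] at h3
  rw [h1, h2, h3, ← map_mul]
  rfl

/-- An algebra generated by its idempotents is zero product determined. -/
theorem isZpd_of_adjoin_isIdempotentElem (h : Algebra.adjoin F {x : A | IsIdempotentElem x} = ⊤) :
    IsZpd F A := by
  intro f hf
  have key : ∀ z x y, f (x * z) y = f x (z * y) := fun z => by
    have hz : z ∈ Algebra.adjoin F {x : A | IsIdempotentElem x} := h ▸ Algebra.mem_top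
    induction hz using Algebra.adjoin_induction with
    | mem e he =>
      intro x y
      have he' : e * e = e := he
      have h1 := hf (x * e) (y - e * y) (by
        rw [mul_assoc, mul_sub, ← mul_assoc e e, he', sub_self, mul_zero])
      have h2 := hf (x - x * e) (e * y) (by
        rw [sub_mul, mul_assoc, ← mul_assoc e e, he', sub_self])
      rw [map_sub, sub_eq_zero] at h1
      rw [map_sub, LinearMap.sub_apply, sub_eq_zero] at h2
      rw [h1, h2]
    | algebraMap c => intro x y; simp [Algebra.algebraMap_eq_smul_one]
    | add a b _ _ ha hb => intro x y; simp [mul_add, add_mul, ha, hb]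
    | mul a b _ _ ha hb => intro x y; rw [← mul_assoc, hb, ha, mul_assoc]
  exact ⟨f 1, fun x y => by simpa using key x 1 y⟩

end Zpd

section Idempotents

variable {F A : Type*} [Field F] [Ring A] [Algebra F A]

theorem TwoSidedIdeal.smul_mem_of_algebra (J : TwoSidedIdeal A) (c : F) {a : A} (ha : a ∈ J) :
    c • a ∈ J := by
  rw [Algebra.smul_def]
  exact J.mul_mem_left _ _ ha

theorem TwoSidedIdeal.eq_top_of_one_mem {J : TwoSidedIdeal A} (h : (1 : A) ∈ J) (a : A) : a ∈ J := by
  simpa using J.mul_mem_left a 1 h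

theorem commutator_mem_commutatorIdeal {e : A} (he : IsIdempotentElem e) (a : A) :
    e * a - a * e ∈ commutatorIdeal A :=
  TwoSidedIdeal.subset_span ⟨e, a, he, rfl⟩

/-- If idempotents are central modulo `J`, then `{a | a * e ∈ J}` is a two-sided ideal for every
idempotent `e`. -/
theorem exists_twoSidedIdeal_mem_iff_mul_mem {J : TwoSidedIdeal A} {e : A}
    (hJ : ∀ a, e * a - a * e ∈ J) : ∃ K : TwoSidedIdeal A, ∀ a, a ∈ K ↔ a * e ∈ J := by
  refine ⟨TwoSidedIdeal.mk' {a | a * e ∈ J} ?_ ?_ ?_ ?_ ?_, fun a => TwoSidedIdeal.mem_mk' ..⟩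
  · simp [J.zero_mem]
  · intro x y hx hy
    simpa [add_mul] using J.add_mem hx hy
  · intro x hx
    simpa using J.neg_mem hx
  · intro x y hy
    simpa [mul_assoc] using J.mul_mem_left x _ hy
  · intro x y hx
    have h1 := J.sub_mem (J.mul_mem_right _ y hx) (J.mul_mem_left x _ (hJ y))
    rw [mul_sub] at h1
    simpa [mul_assoc] using h1

/-- To prove that a property holds for `A / I`, where idempotents are central modulo `I`,
it suffices to treat quotients whose only idempotents coming from `A` are `0` and `1`, and to
assemble the property along idempotents. -/
theorem TwoSidedIdeal.induction_on_idempotents [IsNoetherianRing A] {Q : TwoSidedIdeal A → Prop}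
    (I : TwoSidedIdeal A) (hI : ∀ e a, IsIdempotentElem e → e * a - a * e ∈ I)
    (connected : ∀ J, I ≤ J → (∀ e, IsIdempotentElem e → e ∈ J ∨ 1 - e ∈ J) → Q J)
    (split : ∀ J K L : TwoSidedIdeal A, ∀ e, (∀ a, a ∈ K → a * e ∈ J) →
      (∀ a, a ∈ L → a * (1 - e) ∈ J) → IsIdempotentElem e → Q K → Q L → Q J) : Q I := by
  have hmono : StrictMono (TwoSidedIdeal.asIdeal (R := A)) := by
    refine TwoSidedIdeal.asIdeal.monotone.strictMono_of_injective fun J K h => ?_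
    ext x
    rw [← TwoSidedIdeal.mem_asIdeal, h, TwoSidedIdeal.mem_asIdeal]
  have : WellFoundedGT (TwoSidedIdeal A) := hmono.wellFoundedGT
  suffices ∀ J, I ≤ J → Q J from this I le_rfl
  intro J
  induction J using WellFoundedGT.induction with
  | ind J ih =>
    intro hIJ
    by_cases hJ : ∀ e, IsIdempotentElem e → e ∈ J ∨ 1 - e ∈ J
    · exact connected J hIJ hJ
    push Not at hJ
    obtain ⟨e, he, heJ, heJ'⟩ := hJ
    obtain ⟨K, hK⟩ := exists_twoSidedIdeal_mem_iff_mul_mem (J := J) (fun a => hIJ (hI e a he))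
    obtain ⟨L, hL⟩ := exists_twoSidedIdeal_mem_iff_mul_mem (J := J)
      (fun a => hIJ (hI (1 - e) a he.one_sub))
    have hJK : J ≤ K := fun a ha => (hK a).2 (J.mul_mem_right _ _ ha)
    have hJL : J ≤ L := fun a ha => (hL a).2 (J.mul_mem_right _ _ ha)
    have h1 : J < K := lt_of_le_not_ge hJK fun h => heJ' (h ((hK _).2 (by
      rw [sub_mul, he.eq, one_mul, sub_self]; exact J.zero_mem)))
    have h2 : J < L := lt_of_le_not_ge hJL fun h => heJ (h ((hL _).2 (by
      rw [mul_sub, he.eq, mul_one, sub_self]; exact J.zero_mem)))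
    exact split J K L e (fun a => (hK a).1) (fun a => (hL a).1) he
      (ih K h1 (hIJ.trans hJK)) (ih L h2 (hIJ.trans hJL))

end Idempotents

section Fitting

open Polynomial in
/-- Fitting decomposition of an element of a finite-dimensional algebra: up to an idempotent,
it is a direct sum of a nilpotent and an invertible element. -/
theorem exists_isIdempotentElem_pow_mul_eq_zero (F : Type*) {A : Type*} [Field F] [Ring A]
    [Algebra F A] [FiniteDimensional F A] (a : A) :
    ∃ (e b : A) (n : ℕ), IsIdempotentElem e ∧ a ^ n * e = 0 ∧ a * b = 1 - e ∧ b * a = 1 - e := by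
  obtain ⟨n, r, hr, hp⟩ := WfDvdMonoid.max_power_factor
    (minpoly.ne_zero (Algebra.IsIntegral.isIntegral (R := F) a)) (irreducible_X (R := F))
  have hcop : IsCoprime r ((X : F[X]) ^ (n + 1)) :=
    ((irreducible_X.coprime_iff_not_dvd).2 hr).symm.pow_right
  obtain ⟨u, v, huv⟩ := hcop
  have hzero : aeval a (X ^ n * r) = 0 := by rw [← hp]; exact minpoly.aeval F a
  have hsum : aeval a (v * X ^ n * X) = 1 - aeval a (u * r) := by
    rw [eq_sub_iff_add_eq', ← map_add, mul_assoc, ← pow_succ, huv, map_one]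
  refine ⟨aeval a (u * r), aeval a (v * X ^ n), n, ?_, ?_, ?_, ?_⟩
  · have h : aeval a (u * r) * aeval a (v * X ^ n * X) = 0 := by
      rw [← map_mul, show u * r * (v * X ^ n * X) = (u * v * X) * (X ^ n * r) by ring, map_mul,
        hzero, mul_zero]
    rw [hsum, mul_sub, mul_one, sub_eq_zero] at h
    exact h.symm
  · rw [← aeval_X_pow (R := F), ← map_mul, show X ^ n * (u * r) = u * (X ^ n * r) by ring, map_mul,
      hzero, mul_zero]
  · rw [← hsum, mul_comm (v * X ^ n), map_mul _ X, aeval_X]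
  · rw [← hsum, map_mul _ _ X, aeval_X]

/-- In a ring where every element is nilpotent or invertible, sums of nilpotents are nilpotent. -/
theorem IsNilpotent.add_of_isNilpotent_or_isUnit {B : Type*} [Ring B] [Nontrivial B]
    (h : ∀ b : B, IsNilpotent b ∨ IsUnit b) {x y : B} (hx : IsNilpotent x) (hy : IsNilpotent y) :
    IsNilpotent (x + y) := by
  refine (h _).resolve_right ?_
  rintro ⟨w, hw⟩
  have hwx : IsNilpotent (↑w⁻¹ * x) :=
    (h _).resolve_right fun hu => hx.not_isUnit ((Units.isUnit_units_mul _ _).1 hu)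
  have hwy : 1 - ↑w⁻¹ * x = ↑w⁻¹ * y := by
    rw [sub_eq_iff_eq_add', ← mul_add, ← hw, Units.inv_mul]
  have hu := hwx.isUnit_one_sub
  rw [hwy, Units.isUnit_units_mul] at hu
  exact hy.not_isUnit hu

variable {F A : Type*} [Field F] [Ring A] [Algebra F A] [FiniteDimensional F A]

/-- A zero product determined quotient of a finite-dimensional algebra `A` in which every idempotent
of `A` becomes `0` or `1` is at most one-dimensional. -/
theorem IsZpdModulo.exists_sub_smul_one_mem {J : TwoSidedIdeal A} (hz : IsZpdModulo F J)
    (hJ : ∀ e, IsIdempotentElem e → e ∈ J ∨ 1 - e ∈ J) (a : A) :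
    ∃ c : F, a - c • (1 : A) ∈ J := by
  by_cases h1 : (1 : A) ∈ J
  · exact ⟨0, TwoSidedIdeal.eq_top_of_one_mem h1 _⟩
  let π := J.ringCon.mk'
  have hπ : ∀ x, π x = 0 ↔ x ∈ J := fun x => by
    rw [← TwoSidedIdeal.mem_ker, TwoSidedIdeal.ker_ringCon_mk']
  have hsurj : Function.Surjective π := J.ringCon.mk'_surjective
  have : Nontrivial J.ringCon.Quotient := nontrivial_of_ne 1 0 fun h => h1 ((hπ 1).1 (by
    rw [map_one, h]))
  have hloc : ∀ b : J.ringCon.Quotient, IsNilpotent b ∨ IsUnit b := by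
    intro b
    obtain ⟨x, rfl⟩ := hsurj b
    obtain ⟨e, y, n, he, hn, hxy, hyx⟩ := exists_isIdempotentElem_pow_mul_eq_zero F x
    rcases hJ e he with h | h
    · right
      rw [← hπ] at h
      exact ⟨⟨π x, π y, by rw [← map_mul, hxy, map_sub, h, map_one, sub_zero],
        by rw [← map_mul, hyx, map_sub, h, map_one, sub_zero]⟩, rfl⟩
    · left
      rw [← hπ, map_sub, map_one, sub_eq_zero] at h
      refine ⟨n, ?_⟩
      rw [← mul_one (π x ^ n), h, ← map_pow, ← map_mul, hn, map_zero]
  let N : Submodule F A :=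
    { carrier := {x | IsNilpotent (π x)}
      zero_mem' := by rw [Set.mem_ofPred_eq, map_zero]; exact IsNilpotent.zero
      add_mem' := fun {x y} hx hy => by
        simp only [Set.mem_ofPred_eq, map_add]
        exact hx.add_of_isNilpotent_or_isUnit hloc hy
      smul_mem' := fun c x hx => by
        obtain ⟨n, hn⟩ := hx
        refine ⟨n, ?_⟩
        rw [← map_pow, hπ] at hn ⊢
        rw [smul_pow]
        exact J.smul_mem_of_algebra _ hn }
  have h1N : (1 : A) ∉ N := fun h => (not_isNilpotent_one (R := J.ringCon.Quotient)) (map_one π ▸ h)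
  obtain ⟨l, hl1, hlN⟩ := Submodule.exists_le_ker_of_notMem h1N
  refine ⟨(l 1)⁻¹ * l a, ?_⟩
  by_contra hmem
  obtain ⟨m, hm, hmJ⟩ := Submodule.exists_le_ker_of_notMem
    (p := (TwoSidedIdeal.asIdeal J).restrictScalars F) (v := a - ((l 1)⁻¹ * l a) • (1 : A))
    (by simpa using hmem)
  obtain ⟨Φ, hΦ⟩ := hz (l.smulRight m) fun x y hxy => by
    by_cases hx : x ∈ N
    · have : l x = 0 := hlN hx
      simp [this]
    · have hu : IsUnit (π x) := (hloc _).resolve_left hx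
      have hy : y ∈ J := by
        rw [← hπ, map_mul] at hxy
        rwa [← hπ, ← hu.mul_right_eq_zero]
      have : m y = 0 := hmJ (by simpa using hy)
      simp [this]
  simp only [LinearMap.smulRight_apply, LinearMap.smul_apply, smul_eq_mul] at hΦ
  have h2 := hΦ a 1
  have h3 := hΦ 1 a
  rw [mul_one] at h2
  rw [one_mul] at h3
  apply hm
  rw [map_sub, map_smul, smul_eq_mul]
  rw [sub_eq_zero, mul_assoc, h2, ← h3, inv_mul_cancel_left₀ hl1]

end Fitting

section Adjoin

variable {F A : Type*} [Field F] [Ring A] [Algebra F A]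

variable (F) in
theorem mul_mul_one_sub_mem_adjoin {e : A}
    (he : IsIdempotentElem e) (a : A) :
    e * a * (1 - e) ∈ Algebra.adjoin F {x : A | IsIdempotentElem x} := by
  have hid : IsIdempotentElem (e + e * a * (1 - e)) := by
    have h1 : e * e = e := he
    have h2 : (1 - e) * e = 0 := by rw [sub_mul, h1, one_mul, sub_self]
    calc (e + e * a * (1 - e)) * (e + e * a * (1 - e))
        = e * e + e * e * a * (1 - e) + e * a * ((1 - e) * e) * (1 + a * (1 - e)) := by noncomm_ring
      _ = e + e * a * (1 - e) := by rw [h1, h2]; simp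
  have h := sub_mem (Algebra.subset_adjoin (R := F) (s := {x : A | IsIdempotentElem x}) hid)
    (Algebra.subset_adjoin (R := F) (s := {x : A | IsIdempotentElem x}) he)
  rwa [add_sub_cancel_left] at h

variable (F) in
theorem mul_mul_mul_one_sub_mul_mem_adjoin {e : A}
    (he : IsIdempotentElem e) (x a b : A) :
    a * (e * x * (1 - e)) * b ∈ Algebra.adjoin F {x : A | IsIdempotentElem x} := by
  have h1 : e * e = e := he
  have h2 : (1 - e) * (1 - e) = 1 - e := he.one_sub
  have left : ∀ x, a * (e * x * (1 - e)) ∈ Algebra.adjoin F {x : A | IsIdempotentElem x} := by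
    intro x
    have h : a * (e * x * (1 - e)) = e * (a * e * x) * (1 - e) +
        (1 - e) * a * (1 - (1 - e)) * (e * x * (1 - e)) := by
      calc a * (e * x * (1 - e)) = e * (a * e * x) * (1 - e) +
            (1 - e) * a * e * x * (1 - e) := by noncomm_ring
        _ = e * (a * e * x) * (1 - e) + (1 - e) * a * (e * e) * x * (1 - e) := by rw [h1]
        _ = _ := by noncomm_ring
    rw [h]
    exact add_mem (mul_mul_one_sub_mem_adjoin F he _)
      (mul_mem (mul_mul_one_sub_mem_adjoin F he.one_sub _) (mul_mul_one_sub_mem_adjoin F he _))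
  have h : a * (e * x * (1 - e)) * b = a * (e * (x * (1 - e) * b) * (1 - e)) +
      a * (e * x * (1 - e)) * ((1 - e) * b * (1 - (1 - e))) := by
    calc a * (e * x * (1 - e)) * b = a * (e * (x * (1 - e) * b) * (1 - e)) +
          a * (e * x * (1 - e)) * b * e := by noncomm_ring
      _ = a * (e * (x * (1 - e) * b) * (1 - e)) +
          a * (e * x * ((1 - e) * (1 - e))) * b * e := by rw [h2]
      _ = _ := by noncomm_ring
  rw [h]
  exact add_mem (left _) (mul_mem (left _) (mul_mul_one_sub_mem_adjoin F he.one_sub _))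

theorem mem_adjoin_of_mem_commutatorIdeal {x : A} (hx : x ∈ commutatorIdeal A) :
    x ∈ Algebra.adjoin F {x : A | IsIdempotentElem x} := by
  let E := Algebra.adjoin F {x : A | IsIdempotentElem x}
  let K : TwoSidedIdeal A := TwoSidedIdeal.mk' {x | ∀ a b, a * x * b ∈ E}
    (fun a b => by simp)
    (fun {x y} hx hy a b => by rw [mul_add, add_mul]; exact add_mem (hx a b) (hy a b))
    (fun {x} hx a b => by rw [mul_neg, neg_mul]; exact neg_mem (hx a b))
    (fun {x y} hy a b => by rw [← mul_assoc]; exact hy (a * x) b)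
    (fun {x y} hx a b => by rw [← mul_assoc, mul_assoc]; exact hx a (y * b))
  have hle : commutatorIdeal A ≤ K := by
    rw [commutatorIdeal, TwoSidedIdeal.span_le]
    rintro _ ⟨e, c, he, rfl⟩
    rw [SetLike.mem_coe, TwoSidedIdeal.mem_mk']
    intro a b
    have h : a * (e * c - c * e) * b =
        a * (e * c * (1 - e)) * b - a * ((1 - e) * c * (1 - (1 - e))) * b := by noncomm_ring
    rw [h]
    exact sub_mem (mul_mul_mul_one_sub_mul_mem_adjoin F he _ _ _)
      (mul_mul_mul_one_sub_mul_mem_adjoin F he.one_sub _ _ _)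
  have h := (TwoSidedIdeal.mem_mk' ..).1 (hle hx) 1 1
  rwa [one_mul, mul_one] at h

theorem adjoin_isIdempotentElem_eq_top [FiniteDimensional F A]
    (h : IsZpdModulo F (commutatorIdeal A)) :
    Algebra.adjoin F {x : A | IsIdempotentElem x} = ⊤ := by
  have : IsNoetherianRing A := isNoetherian_of_tower F inferInstance
  suffices ∀ a, ∃ s ∈ Algebra.adjoin F {x : A | IsIdempotentElem x}, a - s ∈ commutatorIdeal A by
    rw [eq_top_iff]
    intro a _
    obtain ⟨s, hs, has⟩ := this a
    simpa using add_mem (mem_adjoin_of_mem_commutatorIdeal (F := F) has) hs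
  refine TwoSidedIdeal.induction_on_idempotents
    (Q := fun J => ∀ a, ∃ s ∈ Algebra.adjoin F {x : A | IsIdempotentElem x}, a - s ∈ J)
    (commutatorIdeal A) (fun e a he => commutator_mem_commutatorIdeal he a) ?_ ?_
  · intro J hJ hloc a
    obtain ⟨c, hc⟩ := (h.mono hJ).exists_sub_smul_one_mem hloc a
    exact ⟨c • 1, Subalgebra.smul_mem _ (one_mem _) c, hc⟩
  · intro J K L e hK hL he hQK hQL a
    obtain ⟨s, hs, has⟩ := hQK a
    obtain ⟨t, ht, hat⟩ := hQL a
    have he' := Algebra.subset_adjoin (R := F) (s := {x : A | IsIdempotentElem x}) he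
    refine ⟨s * e + t * (1 - e), add_mem (mul_mem hs he') (mul_mem ht (sub_mem (one_mem _) he')), ?_⟩
    have h := J.add_mem (hK _ has) (hL _ hat)
    have h' : (a - s) * e + (a - t) * (1 - e) = a - (s * e + t * (1 - e)) := by noncomm_ring
    rwa [h'] at h

theorem IsNilpotent.mem_commutatorIdeal [FiniteDimensional F A]
    (h : Algebra.adjoin F {x : A | IsIdempotentElem x} = ⊤) {x : A} (hx : IsNilpotent x) :
    x ∈ commutatorIdeal A := by
  have : IsNoetherianRing A := isNoetherian_of_tower F inferInstance
  refine TwoSidedIdeal.induction_on_idempotents (Q := fun J => x ∈ J) (commutatorIdeal A)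
    (fun e a he => commutator_mem_commutatorIdeal he a) ?_ ?_
  · intro J hJ hloc
    obtain ⟨c, hc⟩ := ((isZpd_of_adjoin_isIdempotentElem h).isZpdModulo J).exists_sub_smul_one_mem
      hloc x
    by_cases hc0 : c = 0
    · simpa [hc0] using hc
    have hu : IsUnit (x - c • (1 : A)) := by
      have h1 : IsUnit (c • (1 : A)) := by
        rw [← Algebra.algebraMap_eq_smul_one]
        exact (IsUnit.mk0 c hc0).map _
      have h2 : Commute (c • (1 : A)) x := (Commute.one_left x).smul_left c
      rw [sub_eq_neg_add]
      exact hx.isUnit_add_left_of_commute h1.neg h2.symm.neg_right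
    obtain ⟨u, hu⟩ := hu
    refine TwoSidedIdeal.eq_top_of_one_mem ?_ x
    rw [← u.inv_mul, hu]
    exact J.mul_mem_left _ _ hc
  · intro J K L e hK hL he hQK hQL
    have h := J.add_mem (hK _ hQK) (hL _ hQL)
    rwa [← mul_add, add_sub_cancel, mul_one] at h

end Adjoin

section Extension

/-- If `A` is generated by idempotents, then self-extensions of one-dimensional modules split. -/
theorem exists_retraction_of_adjoin_isIdempotentElem {F A S X : Type*} [Field F] [Ring A]
    [Algebra F A] (h : Algebra.adjoin F {x : A | IsIdempotentElem x} = ⊤)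
    [AddCommGroup S] [Module F S] [Module A S] [IsScalarTower F A S]
    (hS : Module.finrank F S = 1) [AddCommGroup X] [Module A X] (i : S →ₗ[A] X) (p : X →ₗ[A] S)
    (hi : Function.Injective i) (hip : LinearMap.range i = LinearMap.ker p) :
    ∃ r : X →ₗ[A] S, r.comp i = LinearMap.id := by
  let _ : Module F X := Module.compHom X (algebraMap F A)
  have hX : ∀ (c : F) (x : X), c • x = algebraMap F A c • x := fun _ _ => rfl
  obtain ⟨s, hs0, hs⟩ := finrank_eq_one_iff'.1 hS
  have key : ∀ a : A, ∃ c : F, (∀ s : S, a • s = c • s) ∧ ∀ x : X, a • x = c • x := by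
    intro a
    have ha : a ∈ Algebra.adjoin F {x : A | IsIdempotentElem x} := h ▸ Algebra.mem_top
    induction ha using Algebra.adjoin_induction with
    | mem e he =>
      have he' : e * e = e := he
      have hzero : ∀ e : A, e * e = e → (∀ s : S, e • s = 0) → ∀ x : X, e • x = 0 := by
        intro e he heS x
        have hx : e • x ∈ LinearMap.range i := by
          rw [hip, LinearMap.mem_ker, map_smul, heS]
        obtain ⟨t, ht⟩ := hx
        rw [← he, mul_smul, ← ht, ← map_smul, heS, map_zero]
      obtain ⟨c, hc⟩ := hs (e • s)
      have hcS : ∀ t : S, e • t = c • t := by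
        intro t
        obtain ⟨d, rfl⟩ := hs t
        rw [smul_comm c d s, hc, ← algebraMap_smul A d s, ← algebraMap_smul A d (e • s),
          ← mul_smul, ← mul_smul, Algebra.commutes]
      have hcc : c * c = c := by
        apply smul_left_injective F hs0
        simp only
        rw [mul_smul, ← hcS, ← hcS, ← mul_smul, he']
      rcases IsIdempotentElem.iff_eq_zero_or_one.1 hcc with rfl | rfl
      · refine ⟨0, hcS, fun x => ?_⟩
        rw [zero_smul, hzero e he' (fun t => by rw [hcS, zero_smul])]
      · refine ⟨1, hcS, fun x => ?_⟩
        have h := hzero (1 - e) (IsIdempotentElem.one_sub he)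
          (fun t => by rw [sub_smul, hcS, one_smul, one_smul, sub_self]) x
        rw [sub_smul, one_smul, sub_eq_zero] at h
        rw [one_smul, ← h]
    | algebraMap c => exact ⟨c, fun s => algebraMap_smul A c s, fun x => (hX c x).symm⟩
    | add a b _ _ ha hb =>
      obtain ⟨c, h1, h2⟩ := ha
      obtain ⟨d, h3, h4⟩ := hb
      exact ⟨c + d, fun s => by rw [add_smul, add_smul, h1, h3],
        fun x => by rw [add_smul, add_smul, h2, h4]⟩
    | mul a b _ _ ha hb =>
      obtain ⟨c, h1, h2⟩ := ha
      obtain ⟨d, h3, h4⟩ := hb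
      exact ⟨c * d, fun s => by rw [mul_smul, mul_smul, h3, h1],
        fun x => by rw [mul_smul, mul_smul, h4, h2]⟩
  let iF : S →ₗ[F] X :=
    { toFun := i
      map_add' := map_add i
      map_smul' := fun c s => by
        rw [RingHom.id_apply, hX, ← map_smul, algebraMap_smul] }
  obtain ⟨r, hr⟩ := iF.exists_leftInverse_of_injective (LinearMap.ker_eq_bot.2 hi)
  refine ⟨{ toFun := r, map_add' := map_add r, map_smul' := fun a x => ?_ }, ?_⟩
  · obtain ⟨c, h1, h2⟩ := key a
    rw [RingHom.id_apply, h1, h2, map_smul]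
  · ext t
    exact LinearMap.congr_fun hr t

end Extension

section Derivation

/-- If self-extensions of one-dimensional `A`-modules split, then every `F`-linear derivation
`A → F` along a character of `A` vanishes. -/
theorem eq_zero_of_derivation_along_character (F : Type*) (A : Type u) [Field F] [Ring A]
    [Algebra F A]
    (h : ∀ (S : Type u) [AddCommGroup S] [Module F S] [Module A S] [IsScalarTower F A S],
      Module.finrank F S = 1 →
      ∀ (X : Type u) [AddCommGroup X] [Module A X] (i : S →ₗ[A] X) (p : X →ₗ[A] S),
        Function.Injective i → Function.Surjective p → LinearMap.range i = LinearMap.ker p →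
        ∃ r : X →ₗ[A] S, r.comp i = LinearMap.id)
    (χ : A →ₐ[F] F) (δ : A →ₗ[F] F) (hδ : ∀ a b, δ (a * b) = χ a * δ b + δ a * χ b) (y : A)
    (hy : χ y = 0) : δ y = 0 := by
  by_contra hδy
  let M : Submodule A A :=
    { carrier := {a | χ a = 0}
      zero_mem' := map_zero χ
      add_mem' := fun {a b} (ha : χ a = 0) (hb : χ b = 0) => by
        rw [Set.mem_ofPred_eq, map_add, ha, hb, add_zero]
      smul_mem' := fun a b (hb : χ b = 0) => by
        rw [Set.mem_ofPred_eq, smul_eq_mul, map_mul, hb, mul_zero] }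
  let K : Submodule A A :=
    { carrier := {a | χ a = 0 ∧ δ a = 0}
      zero_mem' := ⟨map_zero χ, map_zero δ⟩
      add_mem' := fun {a b} ha hb => by
        constructor
        · rw [map_add, ha.1, hb.1, add_zero]
        · rw [map_add, ha.2, hb.2, add_zero]
      smul_mem' := fun a b hb => by
        constructor
        · rw [smul_eq_mul, map_mul, hb.1, mul_zero]
        · rw [smul_eq_mul, hδ, hb.1, hb.2, mul_zero, mul_zero, add_zero] }
  have hM : ∀ a, a ∈ M ↔ χ a = 0 := fun _ => Iff.rfl
  have hK : ∀ a, a ∈ K ↔ χ a = 0 ∧ δ a = 0 := fun _ => Iff.rfl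
  have hKM : K ≤ M := fun a ha => ha.1
  have h1M : (1 : A) ∉ M := fun h => one_ne_zero (α := F) (by rw [← map_one χ]; exact h)
  have hrank : Module.finrank F (A ⧸ M) = 1 := by
    refine finrank_eq_one (M.mkQ 1) (fun h => h1M ((Submodule.Quotient.mk_eq_zero M).1 h)) ?_
    intro w
    obtain ⟨a, rfl⟩ := M.mkQ_surjective w
    refine ⟨χ a, ?_⟩
    rw [← algebraMap_smul A (χ a), ← map_smul, Submodule.mkQ_apply, Submodule.mkQ_apply,
      Submodule.Quotient.eq, hM, map_sub, smul_eq_mul, mul_one, AlgHom.commutes, sub_eq_zero]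
    rfl
  let g : A →ₗ[A] A ⧸ K := K.mkQ ∘ₗ LinearMap.toSpanSingleton A A y
  have hg : ∀ a, g a = K.mkQ (a * y) := fun _ => rfl
  have hgker : ∀ a, g a = 0 ↔ a ∈ M := by
    intro a
    rw [hg, Submodule.mkQ_apply, Submodule.Quotient.mk_eq_zero, hK, hM, map_mul, hδ, hy]
    simp [hδy]
  let i : (A ⧸ M) →ₗ[A] A ⧸ K := M.liftQ g fun a ha => (hgker a).2 ha
  have hi : ∀ a, i (M.mkQ a) = K.mkQ (a * y) := fun _ => rfl
  let p : (A ⧸ K) →ₗ[A] A ⧸ M := K.mapQ M LinearMap.id hKM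
  have hp : ∀ a, p (K.mkQ a) = M.mkQ a := fun _ => rfl
  have hinj : Function.Injective i := by
    rw [injective_iff_map_eq_zero]
    intro w hw
    obtain ⟨a, rfl⟩ := M.mkQ_surjective w
    exact (Submodule.Quotient.mk_eq_zero M).2 ((hgker a).1 hw)
  have hsurj : Function.Surjective p := by
    intro w
    obtain ⟨a, rfl⟩ := M.mkQ_surjective w
    exact ⟨K.mkQ a, rfl⟩
  have hrange : LinearMap.range i = LinearMap.ker p := by
    ext w
    rw [LinearMap.mem_range, LinearMap.mem_ker]
    constructor
    · rintro ⟨v, rfl⟩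
      obtain ⟨a, rfl⟩ := M.mkQ_surjective v
      rw [hi, hp, Submodule.mkQ_apply, Submodule.Quotient.mk_eq_zero, hM, map_mul, hy, mul_zero]
    · obtain ⟨a, rfl⟩ := K.mkQ_surjective w
      intro ha
      rw [hp, Submodule.mkQ_apply, Submodule.Quotient.mk_eq_zero, hM] at ha
      refine ⟨M.mkQ (algebraMap F A (δ a / δ y)), ?_⟩
      rw [hi, Submodule.mkQ_apply, Submodule.mkQ_apply, Submodule.Quotient.eq, hK,
        ← Algebra.smul_def, map_sub, map_sub, map_smul, map_smul, hy, ha, smul_eq_mul, smul_eq_mul,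
        div_mul_cancel₀ _ hδy]
      simp
  obtain ⟨r, hr⟩ := h (A ⧸ M) hrank (A ⧸ K) i p hinj hsurj hrange
  have h1 : r (i (M.mkQ 1)) = M.mkQ 1 := LinearMap.congr_fun hr _
  obtain ⟨s, hs⟩ := M.mkQ_surjective (r (K.mkQ 1))
  have h2 : K.mkQ (1 * y) = y • K.mkQ 1 := by rw [← map_smul, smul_eq_mul, one_mul, mul_one]
  rw [hi, h2, map_smul, ← hs, ← map_smul, Submodule.mkQ_apply, Submodule.mkQ_apply,
    Submodule.Quotient.eq, hM, map_sub, smul_eq_mul, map_mul, hy, map_one] at h1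
  simp at h1

/-- If `M` is a proper two-sided ideal with `A = F + M`, then `M` is the kernel of a character. -/
theorem exists_character_of_sub_smul_one_mem {F A : Type*} [Field F] [Ring A] [Algebra F A]
    {M : TwoSidedIdeal A} (h1 : (1 : A) ∉ M) (hM : ∀ a, ∃ c : F, a - c • (1 : A) ∈ M) :
    ∃ χ : A →ₐ[F] F, ∀ a, a - χ a • (1 : A) ∈ M := by
  choose c hc using hM
  have huniq : ∀ a (d : F), a - d • (1 : A) ∈ M → c a = d := by
    intro a d hd
    by_contra hne
    have h := M.sub_mem hd (hc a)
    rw [sub_sub_sub_cancel_left, ← sub_smul] at h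
    have h' := M.smul_mem_of_algebra (c a - d)⁻¹ h
    rw [smul_smul, inv_mul_cancel₀ (sub_ne_zero.2 hne), one_smul] at h'
    exact h1 h'
  refine ⟨⟨⟨⟨⟨c, ?_⟩, ?_⟩, ?_, ?_⟩, ?_⟩, hc⟩
  · exact huniq _ _ (by rw [one_smul, sub_self]; exact M.zero_mem)
  · intro a b
    refine huniq _ _ ?_
    have h := M.add_mem (M.mul_mem_right _ b (hc a)) (M.smul_mem_of_algebra (c a) (hc b))
    rwa [sub_mul, smul_mul_assoc, one_mul, smul_sub, smul_smul, sub_add_sub_cancel] at h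
  · exact huniq _ _ (by rw [zero_smul, sub_zero]; exact M.zero_mem)
  · intro a b
    refine huniq _ _ ?_
    have h := M.add_mem (hc a) (hc b)
    rwa [sub_add_sub_comm, ← add_smul] at h
  · intro d
    exact huniq _ _ (by
      rw [Algebra.algebraMap_eq_smul_one, Algebra.algebraMap_self_apply, sub_self]
      exact M.zero_mem)

/-- If all derivations of `A` along a character `χ` vanish, then the kernel `M` of `χ` is equal
to `M * M`, in the sense that any subspace containing all products of elements of `M`
contains `M`. -/
theorem ker_character_le_of_mul_mem {F A : Type*} [Field F] [Ring A] [Algebra F A] (χ : A →ₐ[F] F)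
    (h : ∀ δ : A →ₗ[F] F, (∀ a b, δ (a * b) = χ a * δ b + δ a * χ b) → ∀ y, χ y = 0 → δ y = 0)
    (V : Submodule F A) (hV : ∀ a b, χ a = 0 → χ b = 0 → a * b ∈ V) {y : A} (hy : χ y = 0) :
    y ∈ V := by
  by_contra hyV
  obtain ⟨m, hm, hmV⟩ := Submodule.exists_le_ker_of_notMem hyV
  have hδ := h (m - (m 1) • χ.toLinearMap) (fun a b => ?_) y hy
  · simp [hy, hm] at hδ
  · have hker : ∀ a, χ (a - χ a • (1 : A)) = 0 := fun a => by simp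
    have hab : m ((a - χ a • (1 : A)) * (b - χ b • (1 : A))) = 0 := hmV (hV _ _ (hker a) (hker b))
    simp only [sub_mul, mul_sub, smul_mul_assoc, mul_smul_comm, one_mul, mul_one, map_sub, map_smul,
      smul_eq_mul] at hab
    simp only [LinearMap.sub_apply, LinearMap.smul_apply, AlgHom.toLinearMap_apply, map_mul,
      smul_eq_mul]
    linear_combination hab

theorem Ideal.le_of_le_sup_mul_self {A : Type*} [Ring A] {J R : Ideal A} [J.IsTwoSided]
    (hR : IsNilpotent R) (h : R ≤ J ⊔ R * R) : R ≤ J := by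
  have key : ∀ n, R ≤ J ⊔ R ^ (n + 1) := by
    intro n
    induction n with
    | zero => rw [zero_add, Submodule.pow_one]; exact le_sup_right
    | succ n ih =>
      refine h.trans (sup_le le_sup_left ?_)
      rw [Ideal.mul_le]
      intro a ha b hb
      obtain ⟨j, hj, r, hr, rfl⟩ := Submodule.mem_sup.1 (ih ha)
      rw [add_mul, Submodule.pow_succ]
      exact add_mem (Ideal.mem_sup_left (J.mul_mem_right b hj))
        (Ideal.mem_sup_right (Ideal.mul_mem_mul hr hb))
  obtain ⟨n, hn⟩ := hR
  have h := key n
  rwa [Submodule.pow_succ, hn, Ideal.zero_eq_bot, Ideal.bot_mul, sup_bot_eq] at h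

theorem jacobson_subset_commutatorIdeal (F : Type*) (A : Type u) [Field F] [Ring A]
    [Algebra F A] [FiniteDimensional F A]
    (hz : IsZpdModulo F (Ideal.jacobson (⊥ : Ideal A)).toTwoSided)
    (h : ∀ (χ : A →ₐ[F] F) (δ : A →ₗ[F] F), (∀ a b, δ (a * b) = χ a * δ b + δ a * χ b) →
      ∀ y, χ y = 0 → δ y = 0) :
    (↑(Ideal.jacobson (⊥ : Ideal A)) : Set A) ⊆ (commutatorIdeal A : Set A) := by
  have : IsNoetherianRing A := isNoetherian_of_tower F inferInstance
  have : IsArtinianRing A := isArtinian_of_tower F inferInstance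
  set R := Ideal.jacobson (⊥ : Ideal A) with hR
  refine TwoSidedIdeal.induction_on_idempotents (Q := fun J => (R : Set A) ⊆ (J : Set A))
    (commutatorIdeal A) (fun e a he => commutator_mem_commutatorIdeal he a) ?_ ?_
  · intro J hIJ hloc
    by_cases hJ : (1 : A) ∈ J
    · exact fun x _ => TwoSidedIdeal.eq_top_of_one_mem hJ x
    let M := J ⊔ R.toTwoSided
    have hM : ∀ x, x ∈ M ↔ ∃ j ∈ J, ∃ r ∈ R, j + r = x := fun x => by
      simp [M, TwoSidedIdeal.mem_sup]
    have h1M : (1 : A) ∉ M := by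
      rw [hM]
      rintro ⟨j, hj, r, hr, hjr⟩
      obtain ⟨s, hs⟩ := Ideal.mem_jacobson_iff.1 hr (-1)
      have hsj : s * j = 1 := by
        rw [Ideal.mem_bot, sub_eq_zero] at hs
        rw [← hs, eq_sub_of_add_eq hjr]
        noncomm_ring
      exact hJ (hsj ▸ J.mul_mem_left s j hj)
    obtain ⟨χ, hχ⟩ := exists_character_of_sub_smul_one_mem h1M
      ((hz.mono (le_sup_right : _ ≤ M)).exists_sub_smul_one_mem fun e he =>
        (hloc e he).imp (fun h => TwoSidedIdeal.mem_sup_left h)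
          fun h => TwoSidedIdeal.mem_sup_left h)
    have hχM : ∀ a, χ a = 0 ↔ a ∈ M := by
      intro a
      constructor
      · intro ha
        simpa [ha] using hχ a
      · intro ha
        by_contra hne
        have h := M.smul_mem_of_algebra (χ a)⁻¹ (M.sub_mem ha (hχ a))
        rw [sub_sub_cancel, smul_smul, inv_mul_cancel₀ hne, one_smul] at h
        exact h1M h
    suffices R ≤ J.asIdeal from fun x hx => this hx
    refine Ideal.le_of_le_sup_mul_self IsArtinianRing.isNilpotent_jacobson_bot fun x hx => ?_
    refine ker_character_le_of_mul_mem χ (h χ) ((J.asIdeal ⊔ R * R).restrictScalars F) ?_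
      ((hχM x).2 (TwoSidedIdeal.mem_sup_right (by simpa using hx)))
    intro a b ha hb
    obtain ⟨j, hj, r, hr, rfl⟩ := (hM _).1 ((hχM _).1 ha)
    obtain ⟨k, hk, s, hs, rfl⟩ := (hM _).1 ((hχM _).1 hb)
    have hmul : (j + r) * (k + s) = (j * (k + s) + r * k) + r * s := by noncomm_ring
    rw [hmul]
    exact add_mem (Ideal.mem_sup_left (J.add_mem (J.mul_mem_right _ _ hj) (J.mul_mem_left _ _ hk)))
      (Ideal.mem_sup_right (Ideal.mul_mem_mul hr hs))
  · intro J K L e hK hL he hQK hQL x hx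
    have h := J.add_mem (hK _ (hQK hx)) (hL _ (hQL hx))
    rwa [← mul_add, add_sub_cancel, mul_one] at h

end Derivation

/-- for a finite-dimensional algebra `A`, with `E` the subalgebra generated
by idempotents, `I` the ideal generated by commutators of idempotents with arbitrary
elements, and `R` the Jacobson radical, the following are equivalent:
(1) `A` is zero product determined; (2) `A/R` is zero product determined and `R ⊆ I`;
(3) `A/R` is zero product determined and every 1-dimensional `A`-module `S` has
`Ext¹_A(S,S) = 0` (every short exact sequence `0 → S → X → S → 0` splits); (4) `A = E`.
The quotient algebra `A/R` is represented by a surjective `F`-algebra homomorphism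
`π : A → B` whose kernel is exactly `R`. -/
theorem stmt_17 (F : Type*) (A : Type u) [Field F] [Ring A] [Algebra F A]
    [FiniteDimensional F A] :
    List.TFAE [
      -- (1) A is zero product determined
      IsZpd F A,
      -- (2) A/R is zero product determined and R ⊆ I
      (∀ (B : Type u) [Ring B] [Algebra F B] (π : A →ₐ[F] B), Function.Surjective π →
          (∀ a : A, π a = 0 ↔ a ∈ Ideal.jacobson (⊥ : Ideal A)) → IsZpd F B) ∧
        (↑(Ideal.jacobson (⊥ : Ideal A)) : Set A) ⊆ (commutatorIdeal A : Set A),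
      -- (3) A/R is zero product determined and every 1-dimensional A-module S has
      --     Ext¹(S,S) = 0
      (∀ (B : Type u) [Ring B] [Algebra F B] (π : A →ₐ[F] B), Function.Surjective π →
          (∀ a : A, π a = 0 ↔ a ∈ Ideal.jacobson (⊥ : Ideal A)) → IsZpd F B) ∧
        (∀ (S : Type u) [AddCommGroup S] [Module F S] [Module A S] [IsScalarTower F A S],
          Module.finrank F S = 1 →
          ∀ (X : Type u) [AddCommGroup X] [Module A X] (i : S →ₗ[A] X) (p : X →ₗ[A] S),
            Function.Injective i → Function.Surjective p →
            LinearMap.range i = LinearMap.ker p →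
            ∃ r : X →ₗ[A] S, r.comp i = LinearMap.id),
      -- (4) A = E
      Algebra.adjoin F {x : A | IsIdempotentElem x} = ⊤ ] := by
  have : IsArtinianRing A := isArtinian_of_tower F inferInstance
  have hnil : ∀ x ∈ Ideal.jacobson (⊥ : Ideal A), IsNilpotent x := by
    intro x hx
    obtain ⟨n, hn⟩ := IsArtinianRing.isNilpotent_jacobson_bot (R := A)
    exact ⟨n, by simpa [hn] using Ideal.pow_mem_pow hx n⟩
  have hquot : (∀ (B : Type u) [Ring B] [Algebra F B] (π : A →ₐ[F] B), Function.Surjective π →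
      (∀ a : A, π a = 0 ↔ a ∈ Ideal.jacobson (⊥ : Ideal A)) → IsZpd F B) →
      IsZpdModulo F (Ideal.jacobson (⊥ : Ideal A)).toTwoSided := by
    intro h
    let π := Ideal.Quotient.mkₐ F (Ideal.jacobson (⊥ : Ideal A))
    have hπ : Function.Surjective π := Ideal.Quotient.mkₐ_surjective F _
    have hker : ∀ a, π a = 0 ↔ a ∈ Ideal.jacobson (⊥ : Ideal A) :=
      fun a => Ideal.Quotient.eq_zero_iff_mem
    exact (h _ π hπ hker).isZpdModulo_of_ker π hπ _ fun a => by
      rw [hker, Ideal.mem_toTwoSided]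
  tfae_have 1 → 4 := fun h => adjoin_isIdempotentElem_eq_top (h.isZpdModulo _)
  tfae_have 4 → 1 := isZpd_of_adjoin_isIdempotentElem
  tfae_have 4 → 2 := fun h => ⟨fun B _ _ π hπ _ =>
    (isZpd_of_adjoin_isIdempotentElem h).of_surjective π hπ,
    fun x hx => (hnil x hx).mem_commutatorIdeal h⟩
  tfae_have 2 → 4 := fun ⟨h1, h2⟩ => adjoin_isIdempotentElem_eq_top
    ((hquot h1).mono fun x hx => h2 (by simpa using hx))
  tfae_have 4 → 3 := fun h => ⟨fun B _ _ π hπ _ =>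
    (isZpd_of_adjoin_isIdempotentElem h).of_surjective π hπ,
    fun S _ _ _ _ hS X _ _ i p hi _ hip =>
      exists_retraction_of_adjoin_isIdempotentElem h hS i p hi hip⟩
  tfae_have 3 → 2 := fun ⟨h1, h2⟩ => ⟨h1, jacobson_subset_commutatorIdeal F A (hquot h1)
    (eq_zero_of_derivation_along_character F A h2)⟩
  tfae_finish
end

section
/- Let A be a finite-dimensional unital associative F-algebra that is splitting over F, i.e., every finite-dimensional irreducible (simple) A-module S satisfies dim_F End_A(S) = 1. If A has finite global dimension (there exists n such that every A-module has projective dimension at most n), then A is zero product determined. -/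
universe u

/-- `ProjDimLE A n M` means the left `A`-module `M` has projective dimension at most
`n`, i.e. it admits a projective resolution of length at most `n`. -/
def ProjDimLE (A : Type u) [Ring A] :
    ℕ → ∀ (M : Type u) [AddCommGroup M] [Module A M], Prop
  | 0, M, _, _ => Module.Projective A M
  | n + 1, M, _, _ =>
      ∃ (P : Type u) (_ : AddCommGroup P) (_ : Module A P) (f : P →ₗ[A] M),
        Module.Projective A P ∧ Function.Surjective f ∧
          ProjDimLE A n ↥(LinearMap.ker f)

universe v w

open CategoryTheory in
theorem ProjDimLE.hasProjectiveDimensionLT {A : Type u} [Ring A] (n : ℕ) (M : Type u)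
    [AddCommGroup M] [Module A M] (h : ProjDimLE A n M) :
    HasProjectiveDimensionLT (ModuleCat.of A M) (n + 1) := by
  induction n generalizing M with
  | zero =>
    have : Module.Projective A M := h
    have := (IsProjective.iff_projective (R := A) M).1 this
    infer_instance
  | succ n ih =>
    obtain ⟨P, _, _, f, hP, hf, hK⟩ := h
    have := (IsProjective.iff_projective (R := A) P).1 hP
    exact ((LinearMap.shortExact_shortComplexKer hf).hasProjectiveDimensionLT_X₃_iff n this).2
      (ih _ hK)

open CategoryTheory in
theorem hasProjectiveDimensionLT_ker {A : Type u} [Ring A] (n : ℕ) {P M : Type u}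
    [AddCommGroup P] [Module A P] [AddCommGroup M] [Module A M] [Module.Projective A P]
    {f : P →ₗ[A] M} (hf : Function.Surjective f)
    (h : HasProjectiveDimensionLT (ModuleCat.of A M) (n + 2)) :
    HasProjectiveDimensionLT (ModuleCat.of A (LinearMap.ker f)) (n + 1) :=
  ((LinearMap.shortExact_shortComplexKer hf).hasProjectiveDimensionLT_X₃_iff n
    ((IsProjective.iff_projective (R := A) P).1 inferInstance)).1 h

open CategoryTheory in
theorem hasProjectiveDimensionLT_one_iff {A : Type u} [Ring A] {M : Type u}
    [AddCommGroup M] [Module A M] :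
    HasProjectiveDimensionLT (ModuleCat.of A M) 1 ↔ Module.Projective A M := by
  rw [← projective_iff_hasProjectiveDimensionLT_one, ← IsProjective.iff_projective]

section ProjectiveTrace

variable {A : Type u} [Ring A] {V : Type v} [AddCommGroup V] (t : A →+ V)

/-- The trace, with respect to `t`, of an endomorphism of a finitely generated projective module,
computed from a chosen presentation of the module as a retract of a free one. -/
noncomputable def projTrace (P : Type w) [AddCommGroup P] [Module A P] [Module.Finite A P]
    [Module.Projective A P] (φ : P →ₗ[A] P) : V :=
  ∑ i, t ((Module.Finite.exists_comp_eq_id_of_projective A P).choose_spec.choose_spec.choose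
    (φ ((Module.Finite.exists_comp_eq_id_of_projective A P).choose_spec.choose
      (Pi.single i 1))) i)

theorem sum_trace_comp_comm (ht : ∀ a b, t (a * b) = t (b * a)) {ι κ : Type*}
    [Fintype ι] [Fintype κ] {P Q : Type*} [AddCommGroup P] [Module A P] [AddCommGroup Q]
    [Module A Q] (p : ι → P) (f : ι → P →ₗ[A] A) (hp : ∀ x, ∑ i, f i x • p i = x)
    (q : κ → Q) (g : κ → Q →ₗ[A] A) (hq : ∀ x, ∑ i, g i x • q i = x)
    (φ : P →ₗ[A] Q) (ψ : Q →ₗ[A] P) :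
    ∑ i, t (f i (ψ (φ (p i)))) = ∑ j, t (g j (φ (ψ (q j)))) := by
  have h₁ (i : ι) : t (f i (ψ (φ (p i)))) = ∑ j, t (g j (φ (p i)) * f i (ψ (q j))) := by
    conv_lhs => rw [← hq (φ (p i))]
    simp
  have h₂ (j : κ) : t (g j (φ (ψ (q j)))) = ∑ i, t (f i (ψ (q j)) * g j (φ (p i))) := by
    conv_lhs => rw [← hp (ψ (q j))]
    simp
  simp_rw [h₁, h₂]
  rw [Finset.sum_comm]
  simp_rw [ht]

theorem projTrace_eq_sum_dualBasis (P : Type w) [AddCommGroup P] [Module A P] [Module.Finite A P]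
    [Module.Projective A P] : ∃ (n : ℕ) (p : Fin n → P) (f : Fin n → P →ₗ[A] A),
      (∀ x, ∑ i, f i x • p i = x) ∧ ∀ φ, projTrace t P φ = ∑ i, t (f i (φ (p i))) := by
  let h := Module.Finite.exists_comp_eq_id_of_projective A P
  let v := h.choose_spec.choose
  let u := h.choose_spec.choose_spec.choose
  refine ⟨_, fun i ↦ v (Pi.single i 1), fun i ↦ LinearMap.proj i ∘ₗ u, fun x ↦ ?_, fun φ ↦ rfl⟩
  have hvu : v (u x) = x := LinearMap.congr_fun h.choose_spec.choose_spec.choose_spec.2.2 x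
  conv_rhs => rw [← hvu, ← LinearMap.sum_single_apply (fun _ ↦ A) (u x), map_sum]
  refine Finset.sum_congr rfl fun i _ ↦ ?_
  rw [← map_smul]
  congr 1
  ext j
  simp [Pi.single_apply]

variable {P Q R : Type*} [AddCommGroup P] [Module A P] [Module.Finite A P] [Module.Projective A P]
  [AddCommGroup Q] [Module A Q] [Module.Finite A Q] [Module.Projective A Q]
  [AddCommGroup R] [Module A R] [Module.Finite A R] [Module.Projective A R]

theorem projTrace_add (φ ψ : P →ₗ[A] P) :
    projTrace t P (φ + ψ) = projTrace t P φ + projTrace t P ψ := by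
  simp [projTrace, Finset.sum_add_distrib]

theorem projTrace_zero : projTrace t P (0 : P →ₗ[A] P) = 0 := by
  simp [projTrace]

theorem projTrace_comp_comm (ht : ∀ a b, t (a * b) = t (b * a)) (φ : P →ₗ[A] Q)
    (ψ : Q →ₗ[A] P) : projTrace t P (ψ ∘ₗ φ) = projTrace t Q (φ ∘ₗ ψ) := by
  obtain ⟨_, p, f, hp, h⟩ := projTrace_eq_sum_dualBasis t P
  obtain ⟨_, q, g, hq, h'⟩ := projTrace_eq_sum_dualBasis t Q
  rw [h, h']
  exact sum_trace_comp_comm t ht p f hp q g hq φ ψ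

theorem projTrace_toSpanSingleton (ht : ∀ a b, t (a * b) = t (b * a)) (x : A) :
    projTrace t A (LinearMap.toSpanSingleton A A x) = t x := by
  obtain ⟨_, p, f, hp, h⟩ := projTrace_eq_sum_dualBasis t A
  rw [h]
  simpa using sum_trace_comp_comm t ht p f hp (fun _ : Unit ↦ (1 : A)) (fun _ ↦ LinearMap.id)
    (by simp) (LinearMap.toSpanSingleton A A x) LinearMap.id

theorem projTrace_of_exact (ht : ∀ a b, t (a * b) = t (b * a)) {i : P →ₗ[A] Q} {q : Q →ₗ[A] R}
    (hi : Function.Injective i) (hq : Function.Surjective q) (hiq : Function.Exact i q)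
    (α : P →ₗ[A] P) (β : Q →ₗ[A] Q) (γ : R →ₗ[A] R) (hα : β ∘ₗ i = i ∘ₗ α)
    (hγ : q ∘ₗ β = γ ∘ₗ q) :
    projTrace t Q β = projTrace t P α + projTrace t R γ := by
  obtain ⟨s, hs⟩ := Module.projective_lifting_property q LinearMap.id hq
  have hs' (x : R) : q (s x) = x := LinearMap.congr_fun hs x
  have hmem (x : Q) : x - s (q x) ∈ LinearMap.range i := (hiq _).1 (by simp [hs'])
  let e := LinearEquiv.ofInjective i hi
  let r : Q →ₗ[A] P := e.symm.toLinearMap ∘ₗ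
    (LinearMap.codRestrict (LinearMap.range i) (LinearMap.id - s ∘ₗ q) hmem)
  have hir (x : Q) : i (r x) = x - s (q x) := by
    have := congrArg Subtype.val (e.apply_symm_apply ⟨x - s (q x), hmem x⟩)
    exact this
  have hqi (x : P) : q (i x) = 0 := (hiq _).2 ⟨x, rfl⟩
  have hri : r ∘ₗ i = LinearMap.id := by
    ext x
    apply hi
    simp [hir, hqi]
  have hβ : β = i ∘ₗ (α ∘ₗ r) + (β ∘ₗ s) ∘ₗ q := by
    ext x
    have := LinearMap.congr_fun hα (r x)
    simp only [LinearMap.comp_apply, hir] at this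
    simp [← this]
  have h₁ : (α ∘ₗ r) ∘ₗ i = α := by rw [LinearMap.comp_assoc, hri, LinearMap.comp_id]
  have h₂ : q ∘ₗ (β ∘ₗ s) = γ := by
    rw [← LinearMap.comp_assoc, hγ, LinearMap.comp_assoc, hs, LinearMap.comp_id]
  conv_lhs => rw [hβ]
  rw [projTrace_add, projTrace_comp_comm t ht (α ∘ₗ r) i, projTrace_comp_comm t ht q, h₁, h₂]

end ProjectiveTrace

section Tower

open TensorProduct CategoryTheory

variable (F : Type w) {A : Type u} [Field F] [Ring A] [Algebra F A]

/-- The action map `A ⊗[F] M → M`. -/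
noncomputable def actionMap (M : Type u) [AddCommGroup M] [Module F M] [Module A M]
    [IsScalarTower F A M] : A ⊗[F] M →ₗ[A] M :=
  AlgebraTensorModule.lift
    { toFun a := a • LinearMap.id
      map_add' a b := add_smul a b _
      map_smul' a b := mul_smul a b _ }

@[simp]
theorem actionMap_tmul {M : Type u} [AddCommGroup M] [Module F M] [Module A M]
    [IsScalarTower F A M] (a : A) (m : M) : actionMap F M (a ⊗ₜ m) = a • m :=
  rfl

theorem actionMap_surjective (M : Type u) [AddCommGroup M] [Module F M] [Module A M]
    [IsScalarTower F A M] : Function.Surjective (actionMap (A := A) F M) :=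
  fun m ↦ ⟨1 ⊗ₜ m, by simp⟩

section Syzygy

variable {M N L : Type u} [AddCommGroup M] [Module F M] [Module A M] [IsScalarTower F A M]
  [AddCommGroup N] [Module F N] [Module A N] [IsScalarTower F A N]
  [AddCommGroup L] [Module F L] [Module A L] [IsScalarTower F A L]

/-- The map `A ⊗[F] M → A ⊗[F] N` induced by an `A`-linear map `M → N`. -/
noncomputable def freeMap (φ : M →ₗ[A] N) : A ⊗[F] M →ₗ[A] A ⊗[F] N :=
  (φ.restrictScalars F).baseChange A

theorem actionMap_comp_freeMap (φ : M →ₗ[A] N) :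
    actionMap F N ∘ₗ freeMap F φ = φ ∘ₗ actionMap F M := by
  ext m
  simp [freeMap]

theorem freeMap_comp (ψ : N →ₗ[A] L) (φ : M →ₗ[A] N) :
    freeMap F (ψ ∘ₗ φ) = freeMap F ψ ∘ₗ freeMap F φ := by
  ext m
  simp [freeMap]

theorem freeMap_zero : freeMap F (0 : M →ₗ[A] N) = 0 := by
  ext m
  simp [freeMap]

/-- The map between the kernels of the action maps induced by an `A`-linear map. -/
noncomputable def syzygyMap (φ : M →ₗ[A] N) :
    LinearMap.ker (actionMap (A := A) F M) →ₗ[A] LinearMap.ker (actionMap (A := A) F N) :=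
  (freeMap F φ).restrict fun x hx ↦ by
    have := LinearMap.congr_fun (actionMap_comp_freeMap F φ) x
    simp_all

theorem syzygyMap_comp (ψ : N →ₗ[A] L) (φ : M →ₗ[A] N) :
    syzygyMap F (ψ ∘ₗ φ) = syzygyMap F ψ ∘ₗ syzygyMap F φ := by
  ext x
  exact LinearMap.congr_fun (freeMap_comp F ψ φ) x

theorem syzygyMap_zero : syzygyMap F (0 : M →ₗ[A] N) = 0 := by
  ext x
  exact LinearMap.congr_fun (freeMap_zero (A := A) F (M := M) (N := N)) x.1

end Syzygy

/-- An endomorphism `φ` of `M` is a *nilpotent tower* of height `k` if it can be reduced to zero by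
`k` replacements of `j ∘ p` by `p ∘ j`, where all modules involved, except possibly `M`, are
finitely generated of projective dimension at most `n`. -/
def IsNilpotentTower (A : Type u) [Ring A] [Algebra F A] (n : ℕ) :
    ℕ → ∀ (M : Type u) [AddCommGroup M] [Module F M] [Module A M] [IsScalarTower F A M],
      (M →ₗ[A] M) → Prop
  | 0, _, _, _, _, _, φ => φ = 0
  | k + 1, M, _, _, _, _, φ =>
      ∃ (N : Type u) (_ : AddCommGroup N) (_ : Module F N) (_ : Module A N)
        (_ : IsScalarTower F A N) (p : M →ₗ[A] N) (j : N →ₗ[A] M), Module.Finite A N ∧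
          HasProjectiveDimensionLT (ModuleCat.of A N) (n + 1) ∧ φ = j ∘ₗ p ∧
            IsNilpotentTower A n k N (p ∘ₗ j)

variable {M : Type u} [AddCommGroup M] [Module F M] [Module A M] [IsScalarTower F A M]

theorem IsNilpotentTower.of_pow_eq_zero [IsNoetherianRing A] {n : ℕ}
    (hn : ∀ (M : Type u) [AddCommGroup M] [Module A M],
      HasProjectiveDimensionLT (ModuleCat.of A M) (n + 1)) (k : ℕ) [Module.Finite A M]
    (φ : M →ₗ[A] M) (hφ : φ ^ (k + 1) = 0) : IsNilpotentTower F A n k M φ := by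
  induction k generalizing M with
  | zero => exact (pow_one φ).symm.trans hφ
  | succ k ih =>
    refine ⟨LinearMap.range φ, inferInstance, inferInstance, inferInstance, inferInstance,
      φ.rangeRestrict, (LinearMap.range φ).subtype, inferInstance, hn _, rfl, ih _ ?_⟩
    have key (m : ℕ) (x : LinearMap.range φ) :
        (((φ.rangeRestrict ∘ₗ (LinearMap.range φ).subtype) ^ m) x : M) = (φ ^ m) x := by
      induction m with
      | zero => simp
      | succ m ihm =>
        rw [pow_succ', pow_succ', Module.End.mul_apply, Module.End.mul_apply, ← ihm]
        rfl
    ext ⟨_, y, rfl⟩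
    rw [key]
    simpa [pow_succ] using LinearMap.congr_fun hφ y

theorem IsNilpotentTower.freeMap [FiniteDimensional F A] {n k : ℕ} {φ : M →ₗ[A] M}
    (h : IsNilpotentTower F A n k M φ) :
    IsNilpotentTower F A 0 k (A ⊗[F] M) (freeMap F φ) := by
  induction k generalizing M with
  | zero => cases h; exact freeMap_zero F
  | succ k ih =>
    obtain ⟨N, _, _, _, _, p, j, _, _, rfl, h⟩ := h
    have : Module.Finite F N := .trans A N
    refine ⟨A ⊗[F] N, inferInstance, inferInstance, inferInstance, inferInstance, _root_.freeMap F p,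
      _root_.freeMap F j, inferInstance, hasProjectiveDimensionLT_one_iff.2 inferInstance,
      freeMap_comp F j p, ?_⟩
    rw [← freeMap_comp]
    exact ih h

theorem IsNilpotentTower.syzygyMap [FiniteDimensional F A] {n k : ℕ} {φ : M →ₗ[A] M}
    (h : IsNilpotentTower F A (n + 1) k M φ) :
    IsNilpotentTower F A n k (LinearMap.ker (actionMap (A := A) F M)) (syzygyMap F φ) := by
  induction k generalizing M with
  | zero => cases h; exact syzygyMap_zero F
  | succ k ih =>
    obtain ⟨N, _, _, _, _, p, j, _, _, rfl, h⟩ := h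
    have : Module.Finite F N := .trans A N
    have : IsNoetherianRing A := isNoetherian_of_tower F inferInstance
    refine ⟨LinearMap.ker (actionMap (A := A) F N), inferInstance, inferInstance, inferInstance,
      inferInstance, _root_.syzygyMap F p, _root_.syzygyMap F j, inferInstance,
      hasProjectiveDimensionLT_ker n (actionMap_surjective F N) ‹_›, syzygyMap_comp F j p, ?_⟩
    rw [← syzygyMap_comp]
    exact ih h

variable {V : Type v} [AddCommGroup V] (t : A →+ V)

theorem IsNilpotentTower.projTrace_eq_zero_of_projective (ht : ∀ a b, t (a * b) = t (b * a))
    [Module.Finite A M] [Module.Projective A M] {k : ℕ} {φ : M →ₗ[A] M}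
    (h : IsNilpotentTower F A 0 k M φ) : projTrace t M φ = 0 := by
  induction k generalizing M with
  | zero => cases h; exact projTrace_zero t
  | succ k ih =>
    obtain ⟨N, _, _, _, _, p, j, _, hN, rfl, h⟩ := h
    have := hasProjectiveDimensionLT_one_iff.1 hN
    rw [projTrace_comp_comm t ht]
    exact ih h

theorem IsNilpotentTower.projTrace_eq_zero [FiniteDimensional F A]
    (ht : ∀ a b, t (a * b) = t (b * a)) [Module.Finite A M] [Module.Projective A M] {n k : ℕ}
    {φ : M →ₗ[A] M} (h : IsNilpotentTower F A n k M φ) : projTrace t M φ = 0 := by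
  induction n generalizing M with
  | zero => exact h.projTrace_eq_zero_of_projective F t ht
  | succ n ih =>
    have : Module.Finite F M := .trans A M
    have : IsNoetherianRing A := isNoetherian_of_tower F inferInstance
    have : Module.Projective A (LinearMap.ker (actionMap (A := A) F M)) := by
      refine hasProjectiveDimensionLT_one_iff.1
        (hasProjectiveDimensionLT_ker 0 (actionMap_surjective F M) ?_)
      have := hasProjectiveDimensionLT_one_iff.2 ‹Module.Projective A M›
      exact hasProjectiveDimensionLT_of_ge _ 1 _ (by simp)
    have key := projTrace_of_exact t ht (Submodule.subtype_injective _)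
      (actionMap_surjective F M) (LinearMap.exact_subtype_ker_map _) (_root_.syzygyMap F φ)
      (_root_.freeMap F φ) φ rfl (actionMap_comp_freeMap F φ)
    rwa [(h.freeMap F).projTrace_eq_zero_of_projective F t ht, ih (h.syzygyMap F),
      zero_add, eq_comm] at key

end Tower

/-- Over an algebra of finite global dimension, every trace-like map vanishes on nilpotent
elements. -/
theorem map_eq_zero_of_isNilpotent {F : Type w} {A : Type u} [Field F] [Ring A] [Algebra F A]
    [FiniteDimensional F A] {n : ℕ}
    (hn : ∀ (M : Type u) [AddCommGroup M] [Module A M], ProjDimLE A n M) {V : Type v}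
    [AddCommGroup V] (t : A →+ V) (ht : ∀ a b, t (a * b) = t (b * a)) {x : A}
    (hx : IsNilpotent x) : t x = 0 := by
  have : IsNoetherianRing A := isNoetherian_of_tower F inferInstance
  obtain ⟨k, hk⟩ := hx
  have hpow (m : ℕ) (a : A) : (LinearMap.toSpanSingleton A A x ^ m) a = a * x ^ m := by
    induction m generalizing a with
    | zero => simp
    | succ m ih => rw [pow_succ, Module.End.mul_apply, ih, pow_succ']; simp [mul_assoc]
  have h : IsNilpotentTower F A n k A (LinearMap.toSpanSingleton A A x) := by
    refine .of_pow_eq_zero F (fun M ↦ (hn M).hasProjectiveDimensionLT) k _ ?_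
    ext
    simp [hpow, pow_succ, hk]
  rw [← projTrace_toSpanSingleton t ht, h.projTrace_eq_zero F t ht]

section Idempotents

variable (F : Type w) {A : Type u} [Field F] [Ring A] [Algebra F A]

theorem isZpd_of_adjoin_isIdempotentElem_eq_top
    (h : Algebra.adjoin F {e : A | IsIdempotentElem e} = ⊤) : IsZpd F A := by
  intro f hf
  have key (a : A) : ∀ x y, f (x * a) y = f x (a * y) := by
    have ha : a ∈ Algebra.adjoin F {e : A | IsIdempotentElem e} := h ▸ Algebra.mem_top
    induction ha using Algebra.adjoin_induction with
    | mem e he =>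
      intro x y
      have h₁ : f (x * e) (y - e * y) = 0 := hf _ _ (by
        rw [mul_sub, mul_assoc, mul_assoc, ← mul_assoc e e, he.eq, sub_self])
      have h₂ : f (x - x * e) (e * y) = 0 := hf _ _ (by
        rw [sub_mul, mul_assoc, ← mul_assoc e e, he.eq, sub_self])
      rw [map_sub, sub_eq_zero] at h₁
      rw [map_sub, LinearMap.sub_apply, sub_eq_zero] at h₂
      rw [h₁, h₂]
    | algebraMap r => intro x y; simp [Algebra.algebraMap_eq_smul_one]
    | add a b _ _ ha hb => intro x y; simp [mul_add, add_mul, ha, hb]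
    | mul a b _ _ ha hb => intro x y; rw [← mul_assoc, hb, ha, mul_assoc]
  exact ⟨f 1, fun x y ↦ by simpa using key x 1 y⟩

theorem commutator_mem_adjoin_isIdempotentElem {b : A}
    (hb : b ∈ Algebra.adjoin F {e : A | IsIdempotentElem e}) (a : A) :
    b * a - a * b ∈ Algebra.adjoin F {e : A | IsIdempotentElem e} := by
  induction hb using Algebra.adjoin_induction generalizing a with
  | mem e he =>
    have he' : e * e = e := he
    have h₁ : e + (e * a - e * a * e) ∈ Algebra.adjoin F {e : A | IsIdempotentElem e} := by
      refine Algebra.subset_adjoin ?_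
      simp only [Set.mem_ofPred_eq, IsIdempotentElem]
      simp only [mul_add, add_mul, mul_sub, sub_mul, mul_assoc, he', ← mul_assoc e e]
      abel
    have h₂ : e + (a * e - e * a * e) ∈ Algebra.adjoin F {e : A | IsIdempotentElem e} := by
      refine Algebra.subset_adjoin ?_
      simp only [Set.mem_ofPred_eq, IsIdempotentElem]
      simp only [mul_add, add_mul, mul_sub, sub_mul, mul_assoc, he', ← mul_assoc e e]
      abel
    convert sub_mem h₁ h₂ using 1
    abel
  | algebraMap r => simp [Algebra.commutes]
  | add b c _ _ hb hc =>
    convert add_mem (hb a) (hc a) using 1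
    noncomm_ring
  | mul b c _ _ hb hc =>
    convert add_mem (hb (c * a)) (hc (a * b)) using 1
    noncomm_ring

theorem adjoin_isIdempotentElem_pi_matrix {ι : Type*} [Finite ι] {d : ι → Type*}
    [∀ i, Fintype (d i)] [∀ i, DecidableEq (d i)] (D : ι → Type*) [∀ i, Ring (D i)]
    [∀ i, Algebra F (D i)] (hD : ∀ i, Function.Surjective (algebraMap F (D i))) :
    Algebra.adjoin F {e : Π i, Matrix (d i) (d i) (D i) | IsIdempotentElem e} = ⊤ := by
  classical
  have := Fintype.ofFinite ι
  rw [eq_top_iff]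
  rintro x -
  have hdiag (i : ι) (j : d i) :
      IsIdempotentElem (Matrix.single j j 1 : Matrix (d i) (d i) (D i)) := by
    simp [IsIdempotentElem]
  have hunit (i : ι) (j k : d i) :
      (Pi.single i (Matrix.single j k 1) : Π i, Matrix (d i) (d i) (D i)) ∈
        Algebra.adjoin F {e : Π i, Matrix (d i) (d i) (D i) | IsIdempotentElem e} := by
    have hsingle {m : Matrix (d i) (d i) (D i)} (hm : IsIdempotentElem m) :
        (Pi.single i m : Π i, Matrix (d i) (d i) (D i)) ∈
          Algebra.adjoin F {e : Π i, Matrix (d i) (d i) (D i) | IsIdempotentElem e} :=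
      Algebra.subset_adjoin (by
        simp only [Set.mem_ofPred_eq, IsIdempotentElem]
        rw [← Pi.single_mul, hm.eq])
    by_cases hjk : j = k
    · subst hjk
      exact hsingle (hdiag i j)
    · have : IsIdempotentElem
          (Matrix.single j j 1 + Matrix.single j k 1 : Matrix (d i) (d i) (D i)) := by
        simp [IsIdempotentElem, mul_add, add_mul, Ne.symm hjk]
      simpa [Pi.single_add] using sub_mem (hsingle this) (hsingle (hdiag i j))
  rw [← Finset.univ_sum_single x]
  refine sum_mem fun i _ ↦ ?_
  rw [Matrix.matrix_eq_sum_single (x i)]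
  simp_rw [← LinearMap.coe_single F, map_sum]
  refine sum_mem fun j _ ↦ sum_mem fun k _ ↦ ?_
  obtain ⟨c, hc⟩ := hD i (x i j k)
  rw [← hc, Algebra.algebraMap_eq_smul_one, ← Matrix.smul_single, map_smul]
  exact Subalgebra.smul_mem _ (hunit i j k) c

theorem adjoin_isIdempotentElem_of_isSemisimpleRing [FiniteDimensional F A] [IsSemisimpleRing A]
    (hsplit : ∀ (S : Ideal A), IsSimpleModule A S → Module.finrank F (S →ₗ[A] S) = 1) :
    Algebra.adjoin F {e : A | IsIdempotentElem e} = ⊤ := by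
  obtain ⟨n, S, d, hS, -, ⟨e⟩⟩ := IsSemisimpleRing.exists_algEquiv_pi_matrix_end_mulOpposite F A
  have hD (i : Fin n) : Function.Surjective (algebraMap F (Module.End A (S i))ᵐᵒᵖ) := by
    intro φ
    have := hS i
    have : Nontrivial (S i) := IsSimpleModule.nontrivial A _
    have h₁ : (LinearMap.id : S i →ₗ[A] S i) ≠ 0 := one_ne_zero (α := Module.End A (S i))
    obtain ⟨c, hc⟩ := (finrank_eq_one_iff_of_nonzero' _ h₁).1 (hsplit (S i) (hS i)) φ.unop
    refine ⟨c, MulOpposite.unop_injective ?_⟩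
    rw [← hc]
    rfl
  have h := adjoin_isIdempotentElem_pi_matrix F (d := fun i ↦ Fin (d i))
    (fun i ↦ (Module.End A (S i))ᵐᵒᵖ) hD
  rw [eq_top_iff]
  rintro x -
  have hx : e x ∈ Algebra.adjoin F {e | IsIdempotentElem e} := h ▸ Algebra.mem_top
  have hx' := (AlgHom.map_adjoin e.symm.toAlgHom _).le (Subalgebra.mem_map.2 ⟨_, hx, rfl⟩)
  rw [show e.symm.toAlgHom (e x) = x from e.symm_apply_apply x] at hx'
  refine Algebra.adjoin_mono ?_ hx'
  rintro _ ⟨y, hy, rfl⟩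
  exact hy.map e.symm

theorem finrank_end_quotient_eq_one
    (hsplit : ∀ (S : Type u) [AddCommGroup S] [Module F S] [Module A S] [IsScalarTower F A S],
      IsSimpleModule A S → FiniteDimensional F S → Module.finrank F (S →ₗ[A] S) = 1)
    {R : Type u} [Ring R] [Algebra F R] (π : A →ₐ[F] R) (hπ : Function.Surjective π)
    (S : Type u) [AddCommGroup S] [Module F S] [Module R S] [IsScalarTower F R S]
    [IsSimpleModule R S] [FiniteDimensional F S] : Module.finrank F (S →ₗ[R] S) = 1 := by
  let _ : Module A S := Module.compHom S π.toRingHom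
  have hsmul (a : A) (s : S) : a • s = π a • s := rfl
  have : IsScalarTower F A S := ⟨fun c a s ↦ by simp [hsmul]⟩
  have : RingHomSurjective π.toRingHom := ⟨hπ⟩
  let σ : S →ₛₗ[π.toRingHom] S :=
    { toFun := id, map_add' _ _ := rfl, map_smul' _ _ := rfl }
  have hS : IsSimpleModule A S :=
    (LinearMap.isSimpleModule_iff_of_bijective σ Function.bijective_id).2 inferInstance
  rw [← hsplit S hS inferInstance]
  refine LinearEquiv.finrank_eq
    { toFun φ := { toFun := φ, map_add' := map_add φ, map_smul' a := map_smul φ (π a) }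
      invFun φ := { toFun := φ, map_add' := map_add φ, map_smul' r s := ?_ }
      map_add' _ _ := rfl
      map_smul' _ _ := rfl
      left_inv _ := rfl
      right_inv _ := rfl }
  obtain ⟨a, rfl⟩ := hπ r
  exact map_smul φ a s

theorem exists_mem_adjoin_sub_mem_jacobson [FiniteDimensional F A]
    (hsplit : ∀ (S : Type u) [AddCommGroup S] [Module F S] [Module A S] [IsScalarTower F A S],
      IsSimpleModule A S → FiniteDimensional F S → Module.finrank F (S →ₗ[A] S) = 1) (a : A) :
    ∃ b ∈ Algebra.adjoin F {e : A | IsIdempotentElem e}, a - b ∈ Ring.jacobson A := by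
  have : IsArtinianRing A := isArtinian_of_tower F inferInstance
  let π := Ideal.Quotient.mkₐ F (Ring.jacobson A)
  have hπ : Function.Surjective π := Ideal.Quotient.mkₐ_surjective F _
  have : FiniteDimensional F (A ⧸ Ring.jacobson A) := .of_surjective π.toLinearMap hπ
  have htop := adjoin_isIdempotentElem_of_isSemisimpleRing F (A := A ⧸ Ring.jacobson A)
    fun S hS ↦ by
      have : FiniteDimensional F S :=
        .of_injective (S.subtype.restrictScalars F) S.subtype_injective
      exact finrank_end_quotient_eq_one F hsplit π hπ S
  have hle : Algebra.adjoin F {e : A ⧸ Ring.jacobson A | IsIdempotentElem e} ≤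
      (Algebra.adjoin F {e : A | IsIdempotentElem e}).map π := by
    rw [AlgHom.map_adjoin]
    refine Algebra.adjoin_mono fun e he ↦ ?_
    refine exists_isIdempotentElem_eq_of_ker_isNilpotent π.toRingHom (fun x hx ↦ ?_) e (hπ e) he
    obtain ⟨n, hn⟩ := IsSemiprimaryRing.isNilpotent (R := A)
    have hx : x ∈ Ring.jacobson A := Ideal.Quotient.eq_zero_iff_mem.1 hx
    refine ⟨n, ?_⟩
    have := Ideal.pow_mem_pow hx n
    rwa [hn] at this
  obtain ⟨b, hb, hab⟩ := hle (htop ▸ Algebra.mem_top : π a ∈ _)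
  exact ⟨b, hb, Ideal.Quotient.eq.1 hab.symm⟩

theorem subalgebra_eq_top_of_sub_mem_sq {J : Ideal A} (hJ : IsNilpotent J) (B : Subalgebra F A)
    (h₁ : ∀ a, ∃ b ∈ B, a - b ∈ J) (h₂ : ∀ a ∈ J, ∃ b ∈ B, a - b ∈ J ^ 2) : B = ⊤ := by
  have hpow (k : ℕ) : ∀ a ∈ J ^ (k + 1), ∃ b ∈ B, a - b ∈ J ^ (k + 2) := by
    induction k with
    | zero => simpa [Submodule.pow_one] using h₂
    | succ k ih =>
      intro a ha
      rw [Submodule.pow_succ' J k.succ_ne_zero] at ha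
      induction ha using Submodule.mul_induction_on' with
      | mem_mul_mem x hx y hy =>
        obtain ⟨b, hb, hxb⟩ := h₂ x hx
        obtain ⟨c, hc, hyc⟩ := ih y hy
        have hbJ : b ∈ J := by
          simpa using sub_mem hx (Ideal.pow_le_self two_ne_zero hxb)
        refine ⟨b * c, mul_mem hb hc, ?_⟩
        have h : x * y - b * c = (x - b) * y + b * (y - c) := by noncomm_ring
        rw [h]
        refine add_mem ?_ ?_
        · have := Ideal.mul_mem_mul hxb hy
          rwa [← Submodule.pow_add J k.succ_ne_zero, show 2 + (k + 1) = k + 1 + 2 by omega] at this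
        · have := Ideal.mul_mem_mul hbJ hyc
          rwa [← Submodule.pow_succ' J (k + 1).succ_ne_zero] at this
      | add x _ y _ hx hy =>
        obtain ⟨b, hb, hxb⟩ := hx
        obtain ⟨c, hc, hyc⟩ := hy
        exact ⟨b + c, add_mem hb hc, by rw [add_sub_add_comm]; exact add_mem hxb hyc⟩
  have hall (k : ℕ) (a : A) : ∃ b ∈ B, a - b ∈ J ^ (k + 1) := by
    induction k with
    | zero => simpa [Submodule.pow_one] using h₁ a
    | succ k ih =>
      obtain ⟨b, hb, hab⟩ := ih
      obtain ⟨c, hc, habc⟩ := hpow k _ hab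
      exact ⟨b + c, add_mem hb hc, by rwa [← sub_sub]⟩
  obtain ⟨n, hn⟩ := hJ
  rw [eq_top_iff]
  rintro a -
  obtain ⟨b, hb, hab⟩ := hall n a
  rw [Submodule.pow_succ, hn, zero_mul] at hab
  rwa [sub_eq_zero.1 hab]

theorem adjoin_isIdempotentElem_eq_top_s18 (J : Ideal A) (hJ : IsNilpotent J)
    (h₁ : ∀ a, ∃ b ∈ Algebra.adjoin F {e : A | IsIdempotentElem e}, a - b ∈ J)
    (h₂ : ∀ {V : Type u} [AddCommGroup V] (t : A →+ V), (∀ a b, t (a * b) = t (b * a)) →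
      ∀ x ∈ J, t x = 0) :
    Algebra.adjoin F {e : A | IsIdempotentElem e} = ⊤ := by
  set B := Algebra.adjoin F {e : A | IsIdempotentElem e} with hB
  refine subalgebra_eq_top_of_sub_mem_sq F hJ B h₁ fun x hx ↦ ?_
  let W : AddSubgroup A := B.toSubmodule.toAddSubgroup ⊔ (J ^ 2).toAddSubgroup
  have hmem {y : A} : y ∈ W ↔ ∃ b ∈ B, y - b ∈ J ^ 2 := by
    simp only [W, AddSubgroup.mem_sup]
    constructor
    · rintro ⟨b, hb, c, hc, rfl⟩
      exact ⟨b, hb, by simpa using hc⟩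
    · rintro ⟨b, hb, hc⟩
      exact ⟨b, hb, _, hc, by simp⟩
  refine hmem.1 ((QuotientAddGroup.eq_zero_iff x).1
    (h₂ (QuotientAddGroup.mk' W) (fun a b ↦ ?_) x hx))
  rw [← sub_eq_zero, ← map_sub]
  refine (QuotientAddGroup.eq_zero_iff _).2 ?_
  obtain ⟨a', ha', ha⟩ := h₁ a
  obtain ⟨b', hb', hb⟩ := h₁ b
  refine hmem.2 ⟨(a' * b - b * a') - (b' * (a - a') - (a - a') * b'),
    sub_mem (commutator_mem_adjoin_isIdempotentElem F ha' b)
      (commutator_mem_adjoin_isIdempotentElem F hb' _), ?_⟩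
  have h : a * b - b * a - ((a' * b - b * a') - (b' * (a - a') - (a - a') * b')) =
      (a - a') * (b - b') - (b - b') * (a - a') := by noncomm_ring
  rw [h, Submodule.pow_succ, Submodule.pow_one]
  exact sub_mem (Ideal.mul_mem_mul ha hb) (Ideal.mul_mem_mul hb ha)

end Idempotents

/-- a finite-dimensional splitting algebra of finite global dimension is
zero product determined. -/
theorem stmt_18 (F : Type*) (A : Type u) [Field F] [Ring A] [Algebra F A]
    [FiniteDimensional F A]
    (hsplit : ∀ (S : Type u) [AddCommGroup S] [Module F S] [Module A S]
      [IsScalarTower F A S],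
      IsSimpleModule A S → FiniteDimensional F S → Module.finrank F (S →ₗ[A] S) = 1)
    (hgldim : ∃ n : ℕ, ∀ (M : Type u) [AddCommGroup M] [Module A M], ProjDimLE A n M) :
    IsZpd F A := by
  obtain ⟨n, hn⟩ := hgldim
  have : IsArtinianRing A := isArtinian_of_tower F inferInstance
  have hnil := IsSemiprimaryRing.isNilpotent (R := A)
  refine isZpd_of_adjoin_isIdempotentElem_eq_top F (adjoin_isIdempotentElem_eq_top_s18 F
    (Ring.jacobson A) hnil (exists_mem_adjoin_sub_mem_jacobson F hsplit) fun t ht x hx ↦ ?_)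
  obtain ⟨k, hk⟩ := hnil
  have hxk := Ideal.pow_mem_pow hx k
  rw [hk] at hxk
  exact map_eq_zero_of_isNilpotent (F := F) hn t ht ⟨k, hxk⟩
end
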